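/- Assume the cocycle f is convolution invertible. For each h ∈ H the maps θ_h^r : Hom_k(Ā^r,M) → Hom_k(Ā^r,M), θ_h^r(φ)(𝐚) = (1#h^{(1)})^{-1} φ(𝐚^{h^{(2)}}) (1#h^{(3)}), form an endomorphism θ_h^* of the normalized Hochschild cochain complex (Hom_k(Ā^*,M), b^*). For all h, l ∈ H and all n, the endomorphisms of the Hochschild cohomology H^n(A,M) induced by θ_l^* ∘ θ_h^* and by θ_{hl}^* coincide, and θ_1^* induces the identity; consequently H^*(A,M) carries a natural structure of right H-module. -/

import Mathlib

open TensorProduct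

noncomputable section

namespace HopfCrossed

variable (k : Type) [CommRing k]

def TpowCat (V : ModuleCat k) : ℕ → ModuleCat k
  | 0 => ModuleCat.of k k
  | n + 1 => ModuleCat.of k (V ⊗[k] (TpowCat V n))

abbrev Tpow (V : Type) [AddCommGroup V] [Module k V] (n : ℕ) : Type :=
  TpowCat k (ModuleCat.of k V) n

def tp {V : Type} [AddCommGroup V] [Module k V] : ∀ {n : ℕ}, (Fin n → V) → Tpow k V n
  | 0, _ => (1 : k)
  | _ + 1, v => (v 0) ⊗ₜ[k] (tp fun i => v i.succ)

section Coalg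
variable {H : Type} [AddCommGroup H] [Module k H]

def itComul [Coalgebra k H] : ∀ n : ℕ, H →ₗ[k] Tpow k H (n + 1)
  | 0 => (TensorProduct.rid k H).symm.toLinearMap
  | n + 1 =>
      (TensorProduct.map LinearMap.id (itComul n)) ∘ₗ (Coalgebra.comul (R := k))

def SRep [Coalgebra k H] (n : ℕ) (h : H) (N : ℕ) (u : Fin N → Fin (n + 1) → H) : Prop :=
  itComul k n h = ∑ i, tp k (u i)

def iterAct {A : Type} [AddCommGroup A] [Module k A]
    (act : H →ₗ[k] A →ₗ[k] A) : ∀ {s : ℕ}, (Fin s → H) → A → A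
  | 0, _, a => a
  | _ + 1, h, a => act (h 0) (iterAct act (fun i => h i.succ) a)

end Coalg

/-- A weak action of a Hopf algebra `H` on a `k`-algebra `A` (Blattner–Cohen–Montgomery,
Doi–Takeuchi), written `act h a = a^h`. -/
structure WeakAction (k A H : Type) [CommRing k] [Ring A] [Algebra k A] [Ring H] [HopfAlgebra k H] : Type where
  act : H →ₗ[k] A →ₗ[k] A
  act_mul : ∀ (h : H) (a b : A) (N : ℕ) (u : Fin N → Fin 2 → H), SRep k 1 h N u →
    act h (a * b) = ∑ i, act (u i 0) a * act (u i 1) b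
  act_one : ∀ h : H, act h 1 = Coalgebra.counit (R := k) h • (1 : A)
  one_act : ∀ a : A, act 1 a = a

variable {A H : Type} [Ring A] [Algebra k A] [Ring H] [HopfAlgebra k H]
variable {k}

/-- Normality of the cocycle `f`. -/
def IsNormal (f : H →ₗ[k] H →ₗ[k] A) : Prop :=
  ∀ h : H, f h 1 = Coalgebra.counit (R := k) h • (1 : A) ∧
    f 1 h = Coalgebra.counit (R := k) h • (1 : A)

/-- The cocycle condition
`f(l⁽¹⁾,m⁽¹⁾)^{h⁽¹⁾} f(h⁽²⁾, l⁽²⁾m⁽²⁾) = f(h⁽¹⁾,l⁽¹⁾) f(h⁽²⁾l⁽²⁾, m)`. -/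
def IsCocycle (W : WeakAction k A H) (f : H →ₗ[k] H →ₗ[k] A) : Prop :=
  ∀ (h l m : H) (N₁ N₂ N₃ : ℕ) (u : Fin N₁ → Fin 2 → H) (v : Fin N₂ → Fin 2 → H)
    (w : Fin N₃ → Fin 2 → H),
    SRep k 1 h N₁ u → SRep k 1 l N₂ v → SRep k 1 m N₃ w →
    (∑ i, ∑ j, ∑ p, W.act (u i 0) (f (v j 0) (w p 0)) * f (u i 1) (v j 1 * w p 1)) =
      ∑ i, ∑ j, f (u i 0) (v j 0) * f (u i 1 * v j 1) m

/-- The twisted module condition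
`(a^{l⁽¹⁾})^{h⁽¹⁾} f(h⁽²⁾,l⁽²⁾) = f(h⁽¹⁾,l⁽¹⁾) a^{h⁽²⁾l⁽²⁾}`. -/
def IsTwistedModule (W : WeakAction k A H) (f : H →ₗ[k] H →ₗ[k] A) : Prop :=
  ∀ (h l : H) (a : A) (N₁ N₂ : ℕ) (u : Fin N₁ → Fin 2 → H) (v : Fin N₂ → Fin 2 → H),
    SRep k 1 h N₁ u → SRep k 1 l N₂ v →
    (∑ i, ∑ j, W.act (u i 0) (W.act (v j 0) a) * f (u i 1) (v j 1)) =
      ∑ i, ∑ j, f (u i 0) (v j 0) * W.act (u i 1 * v j 1) a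

variable (k A H) in
/-- A crossed product `E = A #_f H` of `A` by `H`:  a ring `E` identified with `A ⊗ H`
as a `k`-module, whose multiplication is given by the crossed product formula
`(a # h)(b # l) = a b^{h⁽¹⁾} f(h⁽²⁾,l⁽¹⁾) # h⁽³⁾ l⁽²⁾`. -/
structure CrossedProduct (E : Type) [Ring E] [Algebra k E] extends WeakAction k A H where
  f : H →ₗ[k] H →ₗ[k] A
  ι : (A ⊗[k] H) ≃ₗ[k] E
  ι_one : ι (1 ⊗ₜ[k] 1) = 1
  ι_mul : ∀ (a b : A) (h l : H) (N M : ℕ) (u : Fin N → Fin 3 → H) (v : Fin M → Fin 2 → H),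
    SRep k 2 h N u → SRep k 1 l M v →
    ι (a ⊗ₜ[k] h) * ι (b ⊗ₜ[k] l) =
      ∑ i, ∑ j, ι ((a * act (u i 0) b * f (u i 1) (v j 0)) ⊗ₜ[k] (u i 2 * v j 1))
  f_normal : IsNormal f
  f_cocycle : IsCocycle toWeakAction f
  f_twisted : IsTwistedModule toWeakAction f

namespace CrossedProduct

variable {E : Type} [Ring E] [Algebra k E] (S : CrossedProduct k A H E)

/-- The canonical map `A → E`, `a ↦ a # 1`. -/
def aE : A →ₗ[k] E := S.ι.toLinearMap ∘ₗ (TensorProduct.mk k A H).flip 1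

/-- The canonical map `H → E`, `h ↦ 1 # h`. -/
def hE : H →ₗ[k] E := S.ι.toLinearMap ∘ₗ (TensorProduct.mk k A H) 1

end CrossedProduct


section Hochschild

variable (k) in
/-- For a `k`-algebra `B`, the submodule `k·1 ⊆ B`. -/
abbrev unitSub (B : Type) [Ring B] [Algebra k B] : Submodule k B :=
  LinearMap.range (Algebra.linearMap k B)

variable (k) in
/-- `B̄ = B/k`. -/
abbrev Qbar (B : Type) [Ring B] [Algebra k B] : Type := B ⧸ unitSub k B

variable (k) in
/-- The canonical projection `B → B̄`. -/
abbrev qbar (B : Type) [Ring B] [Algebra k B] : B →ₗ[k] Qbar k B :=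
  (unitSub k B).mkQ

/-- A `B`-bimodule structure (with commuting `k`-linear left and right actions)
on a `k`-module `M`. -/
structure Bimod (k B M : Type) [CommRing k] [Ring B] [Algebra k B]
    [AddCommGroup M] [Module k M] : Type where
  l : B →ₗ[k] M →ₗ[k] M
  r : B →ₗ[k] M →ₗ[k] M
  l_one : l 1 = LinearMap.id
  r_one : r 1 = LinearMap.id
  l_mul : ∀ x y : B, l (x * y) = l x ∘ₗ l y
  r_mul : ∀ x y : B, r (x * y) = r y ∘ₗ r x
  lr_comm : ∀ x y : B, l x ∘ₗ r y = r y ∘ₗ l x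

/-- Replace the `r`-tuple `a` by the `(r-1)`-tuple obtained by multiplying the
`i`-th and `(i+1)`-st entries. -/
def mulAt {A : Type} [Mul A] {r : ℕ} (a : Fin (r + 1) → A) (i : Fin r) (j : Fin r) : A :=
  if (j : ℕ) < (i : ℕ) then a j.castSucc
  else if (j : ℕ) = (i : ℕ) then a j.castSucc * a j.succ else a j.succ

variable (k) in
/-- The degree-`n` part `M ⊗ B̄^{⊗n}` of the normalized Hochschild chain complex. -/
abbrev HCh (B M : Type) [Ring B] [Algebra k B] [AddCommGroup M] [Module k M]
    (n : ℕ) : Type :=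
  M ⊗[k] Tpow k (Qbar k B) n

variable (k) in
/-- `IsHochschildD l r bd` says that `bd` is the differential of the normalized
Hochschild chain complex of `B` with coefficients in the bimodule `M` (with left
action `l` and right action `r`):
`b(m ⊗ x₁ ⊗ ⋯ ⊗ xₙ) = m x₁ ⊗ x₂ ⊗ ⋯ + ∑ (-1)^i m ⊗ ⋯ ⊗ xᵢxᵢ₊₁ ⊗ ⋯ + (-1)^n xₙ m ⊗ x₁ ⊗ ⋯ ⊗ xₙ₋₁`. -/
def IsHochschildD {B M : Type} [Ring B] [Algebra k B] [AddCommGroup M] [Module k M]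
    (l r : B →ₗ[k] M →ₗ[k] M)
    (bd : ∀ n : ℕ, HCh k B M (n + 1) →ₗ[k] HCh k B M n) : Prop :=
  ∀ (n : ℕ) (m : M) (x : Fin (n + 1) → B),
    bd n (m ⊗ₜ[k] tp k (fun i => qbar k B (x i))) =
      r (x 0) m ⊗ₜ[k] tp k (fun i : Fin n => qbar k B (x i.succ))
      + (∑ i : Fin n, ((-1 : ℤ) ^ ((i : ℕ) + 1)) •
          (m ⊗ₜ[k] tp k (fun j => qbar k B (mulAt x i j))))
      + ((-1 : ℤ) ^ (n + 1)) •
          (l (x (Fin.last n)) m ⊗ₜ[k] tp k (fun i : Fin n => qbar k B (x i.castSucc)))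

variable (k) in
/-- The homology of a (not necessarily everywhere-defined) chain complex
`⋯ → C (n+1) → C n → ⋯ → C 0`; in degree `n+1` it is `ker (d n) / im (d (n+1))`, and in
degree `0` it is `C 0 / im (d 0)`. -/
def Hml {C : ℕ → Type} [∀ n, AddCommGroup (C n)] [∀ n, Module k (C n)]
    (d : ∀ n : ℕ, C (n + 1) →ₗ[k] C n) : ℕ → Type
  | 0 => C 0 ⧸ LinearMap.range (d 0)
  | n + 1 => LinearMap.ker (d n) ⧸
      (LinearMap.range (d (n + 1))).comap (LinearMap.ker (d n)).subtype

instance {C : ℕ → Type} [∀ n, AddCommGroup (C n)] [∀ n, Module k (C n)]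
    (d : ∀ n : ℕ, C (n + 1) →ₗ[k] C n) : ∀ n, AddCommGroup (Hml k d n)
  | 0 => inferInstanceAs (AddCommGroup (C 0 ⧸ LinearMap.range (d 0)))
  | n + 1 => inferInstanceAs (AddCommGroup (LinearMap.ker (d n) ⧸
      (LinearMap.range (d (n + 1))).comap (LinearMap.ker (d n)).subtype))

instance {C : ℕ → Type} [∀ n, AddCommGroup (C n)] [∀ n, Module k (C n)]
    (d : ∀ n : ℕ, C (n + 1) →ₗ[k] C n) : ∀ n, Module k (Hml k d n)
  | 0 => inferInstanceAs (Module k (C 0 ⧸ LinearMap.range (d 0)))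
  | n + 1 => inferInstanceAs (Module k (LinearMap.ker (d n) ⧸
      (LinearMap.range (d (n + 1))).comap (LinearMap.ker (d n)).subtype))

end Hochschild

section CoHochschild

variable (k) in
/-- The degree-`n` part `Hom_k(B̄^{⊗n}, M)` of the normalized Hochschild cochain complex. -/
abbrev CoHCh (B M : Type) [Ring B] [Algebra k B] [AddCommGroup M] [Module k M]
    (n : ℕ) : Type :=
  Tpow k (Qbar k B) n →ₗ[k] M

variable (k) in
/-- `IsHochschildCoD l r bd` says that `bd` is the differential of the normalized
Hochschild cochain complex of `B` with coefficients in the bimodule `M`. -/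
def IsHochschildCoD {B M : Type} [Ring B] [Algebra k B] [AddCommGroup M] [Module k M]
    (l r : B →ₗ[k] M →ₗ[k] M)
    (bd : ∀ n : ℕ, CoHCh k B M n →ₗ[k] CoHCh k B M (n + 1)) : Prop :=
  ∀ (n : ℕ) (φ : CoHCh k B M n) (x : Fin (n + 1) → B),
    bd n φ (tp k (fun i => qbar k B (x i))) =
      l (x 0) (φ (tp k (fun i : Fin n => qbar k B (x i.succ))))
      + (∑ i : Fin n, ((-1 : ℤ) ^ ((i : ℕ) + 1)) •
          (φ (tp k (fun j => qbar k B (mulAt x i j)))))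
      + ((-1 : ℤ) ^ (n + 1)) •
          (r (x (Fin.last n)) (φ (tp k (fun i : Fin n => qbar k B (x i.castSucc)))))

variable (k) in
/-- The cohomology of a cochain complex `C 0 → C 1 → ⋯`. -/
def CoHml {C : ℕ → Type} [∀ n, AddCommGroup (C n)] [∀ n, Module k (C n)]
    (d : ∀ n : ℕ, C n →ₗ[k] C (n + 1)) : ℕ → Type
  | 0 => LinearMap.ker (d 0)
  | n + 1 => LinearMap.ker (d (n + 1)) ⧸
      (LinearMap.range (d n)).comap (LinearMap.ker (d (n + 1))).subtype

instance {C : ℕ → Type} [∀ n, AddCommGroup (C n)] [∀ n, Module k (C n)]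
    (d : ∀ n : ℕ, C n →ₗ[k] C (n + 1)) : ∀ n, AddCommGroup (CoHml k d n)
  | 0 => inferInstanceAs (AddCommGroup (LinearMap.ker (d 0)))
  | n + 1 => inferInstanceAs (AddCommGroup (LinearMap.ker (d (n + 1)) ⧸
      (LinearMap.range (d n)).comap (LinearMap.ker (d (n + 1))).subtype))

instance {C : ℕ → Type} [∀ n, AddCommGroup (C n)] [∀ n, Module k (C n)]
    (d : ∀ n : ℕ, C n →ₗ[k] C (n + 1)) : ∀ n, Module k (CoHml k d n)
  | 0 => inferInstanceAs (Module k (LinearMap.ker (d 0)))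
  | n + 1 => inferInstanceAs (Module k (LinearMap.ker (d (n + 1)) ⧸
      (LinearMap.range (d n)).comap (LinearMap.ker (d (n + 1))).subtype))

end CoHochschild

section Statement14

variable {k A H E M : Type} [CommRing k] [Ring A] [Algebra k A] [Ring H] [HopfAlgebra k H]
  [Ring E] [Algebra k E] [AddCommGroup M] [Module k M]

/-- `IsConvInverse f g` : `g` is the convolution inverse of `f` in `Hom_k(H ⊗ H, A)`. -/
def IsConvInverse (f g : H →ₗ[k] H →ₗ[k] A) : Prop :=
  ∀ (h l : H) (N M' : ℕ) (u : Fin N → Fin 2 → H) (v : Fin M' → Fin 2 → H),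
    SRep k 1 h N u → SRep k 1 l M' v →
    (∑ i, ∑ j, f (u i 0) (v j 0) * g (u i 1) (v j 1)) =
        (Coalgebra.counit (R := k) h * Coalgebra.counit (R := k) l) • (1 : A) ∧
    (∑ i, ∑ j, g (u i 0) (v j 0) * f (u i 1) (v j 1)) =
        (Coalgebra.counit (R := k) h * Coalgebra.counit (R := k) l) • (1 : A)

/-- `IsCoTheta S Bi finv θ` : for each `h ∈ H`, `θ h` is the family of maps
`θ_h^r : Hom_k(Ā^r, M) → Hom_k(Ā^r, M)` given by
`θ_h^r(φ)(𝐚) = (1 # h⁽¹⁾)⁻¹ φ(𝐚^{h⁽²⁾}) (1 # h⁽³⁾)`. -/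
def IsCoTheta (S : CrossedProduct k A H E) (Bi : Bimod k E M)
    (finv : H →ₗ[k] H →ₗ[k] A)
    (θ : H → ∀ r : ℕ, CoHCh k A M r →ₗ[k] CoHCh k A M r) : Prop :=
  ∀ (h : H) (r : ℕ) (φ : CoHCh k A M r) (a : Fin r → A) (N : ℕ)
    (u : Fin N → Fin (r + 4) → H),
    SRep k (r + 3) h N u →
    θ h r φ (tp k (fun j => qbar k A (a j))) =
      ∑ i, Bi.r (S.hE (u i (Fin.last (r + 3))))
        (Bi.l (S.ι ((finv (HopfAlgebra.antipode (R := k) (u i 1)) (u i 2)) ⊗ₜ[k]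
            HopfAlgebra.antipode (R := k) (u i 0)))
          (φ (tp k (fun j : Fin r => qbar k A (S.act (u i ⟨(j : ℕ) + 3, by omega⟩) (a j))))))

end Statement14

end HopfCrossed

namespace HCP

section sw
variable {k C P Q X Y Z : Type} [CommRing k] [AddCommGroup C] [Module k C] [Coalgebra k C]
  [AddCommGroup P] [Module k P] [AddCommGroup Q] [Module k Q] [AddCommGroup X] [Module k X]
  [AddCommGroup Y] [Module k Y] [AddCommGroup Z] [Module k Z]

def sw : (C →ₗ[k] C →ₗ[k] P) →ₗ[k] C →ₗ[k] P :=
  (LinearMap.lcomp k P (Coalgebra.comul (R := k) (A := C))) ∘ₗ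
    (TensorProduct.lift.equiv (.id k) C C P).toLinearMap

lemma sw_apply (B : C →ₗ[k] C →ₗ[k] P) (c : C) :
    sw B c = TensorProduct.lift B (Coalgebra.comul (R := k) c) := rfl

lemma sw_rep (B : C →ₗ[k] C →ₗ[k] P) {c : C} {N : ℕ} {u : Fin N → Fin 2 → C}
    (h : Coalgebra.comul (R := k) c = ∑ i, u i 0 ⊗ₜ[k] u i 1) :
    sw B c = ∑ i, B (u i 0) (u i 1) := by
  rw [sw_apply, h]; simp

variable (k) in
lemma exists_rep (c : C) : ∃ (N : ℕ) (u : Fin N → Fin 2 → C),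
    Coalgebra.comul (R := k) c = ∑ i, u i 0 ⊗ₜ[k] u i 1 := by
  induction Coalgebra.comul (R := k) c using TensorProduct.induction_on with
  | zero => exact ⟨0, Fin.elim0, by simp⟩
  | tmul x y => exact ⟨1, fun _ => ![x, y], by simp⟩
  | add x y hx hy =>
    obtain ⟨N, u, rfl⟩ := hx
    obtain ⟨N', u', rfl⟩ := hy
    exact ⟨N + N', Fin.append u u', by simp [Fin.sum_univ_add]⟩

lemma comp_sw (g : P →ₗ[k] Q) (B : C →ₗ[k] C →ₗ[k] P) :
    g ∘ₗ sw B = sw (B.compr₂ g) := by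
  ext c
  obtain ⟨N, u, h⟩ := exists_rep k c
  simp [sw_rep _ h]

lemma sw_sw (T : C →ₗ[k] C →ₗ[k] C →ₗ[k] P) : sw (sw T) = sw (sw ∘ₗ T) := by
  ext c
  have key := Coalgebra.coassoc_apply (R := k) c
  let L : C ⊗[k] (C ⊗[k] C) →ₗ[k] P :=
    TensorProduct.lift ((TensorProduct.lift.equiv (.id k) C C P).toLinearMap ∘ₗ T)
  have h1 : TensorProduct.lift (sw T) =
      L ∘ₗ (TensorProduct.assoc k C C C).toLinearMap ∘ₗ
        (Coalgebra.comul (R := k) (A := C)).rTensor C := by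
    ext x y
    obtain ⟨N, u, h⟩ := exists_rep k x
    simp [sw_rep _ h, h, L, TensorProduct.sum_tmul]
  have h2 : TensorProduct.lift (sw ∘ₗ T) = L ∘ₗ (Coalgebra.comul (R := k) (A := C)).lTensor C := by
    ext x y
    simp [L, sw_apply]; rfl
  rw [sw_apply, sw_apply, h1, h2]
  simp only [LinearMap.comp_apply, LinearEquiv.coe_coe, key]

lemma sw_counit_left {B : C →ₗ[k] C →ₗ[k] P} (g : C →ₗ[k] P)
    (h : ∀ x y, B x y = Coalgebra.counit (R := k) x • g y) : sw B = g := by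
  ext c
  have h1 : TensorProduct.lift B = g ∘ₗ (TensorProduct.lid k C).toLinearMap ∘ₗ
      (Coalgebra.counit (R := k) (A := C)).rTensor C := by
    ext x y; simp [h]
  rw [sw_apply, h1]; simp

lemma sw_counit_right {B : C →ₗ[k] C →ₗ[k] P} (g : C →ₗ[k] P)
    (h : ∀ x y, B x y = Coalgebra.counit (R := k) y • g x) : sw B = g := by
  ext c
  have h1 : TensorProduct.lift B = g ∘ₗ (TensorProduct.rid k C).toLinearMap ∘ₗ
      (Coalgebra.counit (R := k) (A := C)).lTensor C := by
    ext x y; simp [h]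
  rw [sw_apply, h1]; simp

/-- convolution product along a bilinear map -/
def cvp (B : X →ₗ[k] Y →ₗ[k] Z) (F : C →ₗ[k] X) (G : C →ₗ[k] Y) : C →ₗ[k] Z :=
  sw (B.compl₁₂ F G)

lemma cvp_rep (B : X →ₗ[k] Y →ₗ[k] Z) (F : C →ₗ[k] X) (G : C →ₗ[k] Y)
    {c : C} {N : ℕ} {u : Fin N → Fin 2 → C}
    (h : Coalgebra.comul (R := k) c = ∑ i, u i 0 ⊗ₜ[k] u i 1) :
    cvp B F G c = ∑ i, B (F (u i 0)) (G (u i 1)) := by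
  rw [cvp, sw_rep _ h]; simp

variable {V W U : Type} [AddCommGroup V] [Module k V] [AddCommGroup W] [Module k W]
  [AddCommGroup U] [Module k U]

lemma cvp_assoc (B₁ : X →ₗ[k] Y →ₗ[k] Z) (B₂ : V →ₗ[k] W →ₗ[k] X)
    (B₃ : V →ₗ[k] U →ₗ[k] Z) (B₄ : W →ₗ[k] Y →ₗ[k] U)
    (F : C →ₗ[k] V) (G : C →ₗ[k] W) (K : C →ₗ[k] Y)
    (h : ∀ x y z, B₁ (B₂ x y) z = B₃ x (B₄ y z)) :
    cvp B₁ (cvp B₂ F G) K = cvp B₃ F (cvp B₄ G K) := by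
  let T : C →ₗ[k] C →ₗ[k] C →ₗ[k] Z := (B₂.compl₁₂ F G).compr₂ (B₁.compl₂ K)
  have h1 : cvp B₁ (cvp B₂ F G) K = sw (sw T) := by
    rw [cvp]; congr 1
    ext x y
    obtain ⟨N, u, hu⟩ := exists_rep k x
    simp [T, sw_rep _ hu, cvp_rep _ _ _ hu]
  have h2 : cvp B₃ F (cvp B₄ G K) = sw (sw ∘ₗ T) := by
    rw [cvp]; congr 1
    ext x y
    obtain ⟨N, u, hu⟩ := exists_rep k y
    simp [T, sw_rep _ hu, cvp_rep _ _ _ hu, h]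
  rw [h1, h2, sw_sw]

lemma comp_cvp (g : Z →ₗ[k] P) (B : X →ₗ[k] Y →ₗ[k] Z) (F : C →ₗ[k] X) (G : C →ₗ[k] Y) :
    g ∘ₗ cvp B F G = cvp (B.compr₂ g) F G := by
  rw [cvp, comp_sw]; rfl

lemma cvp_counit_left (B : X →ₗ[k] Y →ₗ[k] Z) (x : X) (G : C →ₗ[k] Y) :
    cvp B ((LinearMap.toSpanSingleton k X x) ∘ₗ Coalgebra.counit) G = B x ∘ₗ G := by
  apply sw_counit_left; intros; simp

lemma cvp_counit_right (B : X →ₗ[k] Y →ₗ[k] Z) (y : Y) (G : C →ₗ[k] X) :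
    cvp B G ((LinearMap.toSpanSingleton k Y y) ∘ₗ Coalgebra.counit) = B.flip y ∘ₗ G := by
  apply sw_counit_right; intros; simp

end sw
end HCP

namespace HCP
open HopfCrossed

section bD

/-- shifted left action on functions -/
def lF {X N : Type} [AddCommGroup N] (m : X → X → X) (x : X) : (X → N) →+ (X → N) where
  toFun g := fun y => g (m y x)
  map_zero' := rfl
  map_add' _ _ := rfl

def rF {X N : Type} [AddCommGroup N] (r : X → N →+ N) (x : X) : (X → N) →+ (X → N) where
  toFun g := fun y => r x (g y)
  map_zero' := by ext; simp
  map_add' _ _ := by ext; simp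

def bD : ∀ (n : ℕ) {X N : Type} [AddCommGroup N] (_ : X → X → X) (_ _ : X → N →+ N),
    ((Fin n → X) → N) → (Fin (n + 1) → X) → N
  | 0, _, _, _, _, l, r, F, x => l (x 0) (F (Fin.tail x)) - r (x 0) (F (Fin.tail x))
  | n + 1, _, _, _, m, l, r, F, x => l (x 0) (F (Fin.tail x)) -
      bD n m (lF m) (rF r) (fun x' y => F (Fin.cons y x')) (Fin.tail x) (x 0)

lemma bD_zero {X N : Type} [AddCommGroup N] (m : X → X → X) (l r : X → N →+ N)
    (F : (Fin 0 → X) → N) (x : Fin 1 → X) :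
    bD 0 m l r F x = l (x 0) (F (Fin.tail x)) - r (x 0) (F (Fin.tail x)) := rfl

lemma bD_succ (n : ℕ) {X N : Type} [AddCommGroup N] (m : X → X → X) (l r : X → N →+ N)
    (F : (Fin (n + 1) → X) → N) (x : Fin (n + 2) → X) :
    bD (n + 1) m l r F x = l (x 0) (F (Fin.tail x)) -
      bD n m (lF m) (rF r) (fun x' y => F (Fin.cons y x')) (Fin.tail x) (x 0) := rfl

lemma tail_comp {n : ℕ} {X X' : Type} (p : X' → X) (x : Fin (n + 1) → X') :
    Fin.tail (p ∘ x) = p ∘ Fin.tail x := rfl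

lemma comp_cons {n : ℕ} {X X' : Type} (p : X' → X) (y : X') (x : Fin n → X') :
    p ∘ (Fin.cons y x : Fin (n + 1) → X') = Fin.cons (p y) (p ∘ x) := by
  ext i; refine Fin.cases ?_ (fun _ => ?_) i <;> simp

lemma bD_nat (n : ℕ) {X X' N N' : Type} [AddCommGroup N] [AddCommGroup N']
    (m : X → X → X) (l r : X → N →+ N) (m' : X' → X' → X') (l' r' : X' → N' →+ N')
    (p : X' → X) (hp : ∀ a b, p (m' a b) = m (p a) (p b)) (T : N →+ N')
    (hl : ∀ x v, T (l (p x) v) = l' x (T v)) (hr : ∀ x v, T (r (p x) v) = r' x (T v))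
    (F : (Fin n → X) → N) (x : Fin (n + 1) → X') :
    T (bD n m l r F (p ∘ x)) = bD n m' l' r' (fun x' => T (F (p ∘ x'))) x := by
  induction n generalizing N N' with
  | zero => simp [bD_zero, hl, hr, tail_comp]
  | succ n ih =>
    rw [bD_succ, bD_succ, map_sub, Function.comp_apply, hl, tail_comp]
    congr 1
    let T' : (X → N) →+ (X' → N') :=
      { toFun := fun g y => T (g (p y))
        map_zero' := by ext; simp
        map_add' := by intros; ext; simp }
    have := ih (lF m) (rF r) (lF m') (rF r') T' (by intro x v; ext y; simp [T', lF, hp])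
      (by intro x v; ext y; simp [T', rF, hr]) (fun x' y => F (Fin.cons y x')) (Fin.tail x)
    have h2 := congrFun this (x 0)
    simp only [comp_cons]
    exact h2

lemma bD_sub (n : ℕ) {X N : Type} [AddCommGroup N] 
    (m : X → X → X) (l r : X → N →+ N) (F G : (Fin n → X) → N) (x : Fin (n + 1) → X) :
    bD n m l r (fun x => F x - G x) x = bD n m l r F x - bD n m l r G x := by
  induction n generalizing N with
  | zero => simp only [bD_zero, map_sub]; abel
  | succ n ih =>
    simp only [bD_succ, map_sub]
    have := congrFun (ih (lF m) (rF r) (fun x' y => F (Fin.cons y x'))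
      (fun x' y => G (Fin.cons y x')) (Fin.tail x)) (x 0)
    rw [Pi.sub_apply] at this
    have h2 : (fun (x' : Fin n → X) => (fun y => F (Fin.cons y x')) - (fun y => G (Fin.cons y x')))
      = (fun x' y => F (Fin.cons y x') - G (Fin.cons y x')) := rfl
    rw [h2] at this
    rw [this]; abel

/-- the explicit formula -/
lemma bD_formula (n : ℕ) {X N : Type} [Mul X] [AddCommGroup N] (l r : X → N →+ N)
    (F : (Fin n → X) → N) (x : Fin (n + 1) → X) :
    bD n (· * ·) l r F x = l (x 0) (F (fun i : Fin n => x i.succ))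
      + (∑ i : Fin n, ((-1 : ℤ) ^ ((i : ℕ) + 1)) • F (mulAt x i))
      + ((-1 : ℤ) ^ (n + 1)) • r (x (Fin.last n)) (F (fun i : Fin n => x i.castSucc)) := by
  induction n generalizing N with
  | zero =>
    have : (Fin.tail x) = fun i : Fin 0 => x i.castSucc := by ext i; exact i.elim0
    simp only [bD_zero]
    rw [this]
    have : (fun i : Fin 0 => x i.succ) = fun i : Fin 0 => x i.castSucc := by ext i; exact i.elim0
    rw [this]
    simp [sub_eq_add_neg]
  | succ n ih =>
    rw [bD_succ, ih, Fin.sum_univ_succ]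
    have e0 : mulAt x 0 = Fin.cons (x 0 * Fin.tail x 0) (fun i : Fin n => Fin.tail x i.succ) := by
      ext j; refine Fin.cases ?_ (fun j => ?_) j <;> simp [mulAt, Fin.tail]
    have e1 : ∀ i : Fin n, mulAt x i.succ = Fin.cons (x 0) (mulAt (Fin.tail x) i) := by
      intro i
      ext j; refine Fin.cases ?_ (fun j => ?_) j <;> simp [mulAt, Fin.tail]
    have e2 : (fun i : Fin (n + 1) => x i.castSucc) =
        Fin.cons (x 0) (fun i : Fin n => Fin.tail x i.castSucc) := by
      ext j; refine Fin.cases ?_ (fun j => ?_) j <;> simp [Fin.tail]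
    rw [e0, e2]
    simp only [e1, Pi.add_apply, Pi.neg_apply, Finset.sum_apply, Pi.smul_apply, lF, rF, AddMonoidHom.coe_mk, ZeroHom.coe_mk,
      Fin.val_zero, Fin.val_succ, pow_succ, mul_neg, mul_one, neg_smul, one_smul, zero_add, pow_zero,
      Finset.sum_neg_distrib, neg_neg, neg_mul]
    have e3 : Fin.tail x (Fin.last n) = x (Fin.last (n + 1)) := rfl
    have e4 : Fin.tail x = fun i => x i.succ := rfl
    rw [e3, ← e4]
    abel

end bD

section sh
variable {R Aa : Type}

def sh : ∀ (n : ℕ) {N : Type} [AddCommGroup N] (_ _ : Aa → R) (_ : R),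
    ((Fin (n + 1) → R) → N) → (Fin n → Aa) → N
  | 0, _, _, _, β, f, F, a => F (Fin.cons f (β ∘ a))
  | n + 1, _, _, α, β, f, F, a => F (Fin.cons f (β ∘ a)) -
      sh n α β f (fun x' y => F (Fin.cons y x')) (Fin.tail a) (α (a 0))

variable (α β : Aa → R) (f : R)

lemma sh_zero {N : Type} [AddCommGroup N] (F : (Fin 1 → R) → N) (a : Fin 0 → Aa) :
    sh 0 α β f F a = F (Fin.cons f (β ∘ a)) := rfl

lemma sh_succ (n : ℕ) {N : Type} [AddCommGroup N] (F : (Fin (n + 2) → R) → N)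
    (a : Fin (n + 1) → Aa) :
    sh (n + 1) α β f F a = F (Fin.cons f (β ∘ a)) -
      sh n α β f (fun x' y => F (Fin.cons y x')) (Fin.tail a) (α (a 0)) := rfl

lemma sh_nat (n : ℕ) {N N' : Type} [AddCommGroup N] [AddCommGroup N'] (T : N →+ N')
    (F : (Fin (n + 1) → R) → N) (a : Fin n → Aa) :
    T (sh n α β f F a) = sh n α β f (fun x => T (F x)) a := by
  induction n generalizing N N' with
  | zero => rfl
  | succ n ih =>
    rw [sh_succ, sh_succ, map_sub]
    congr 1
    let T' : (R → N) →+ (R → N') :=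
      { toFun := fun g y => T (g y)
        map_zero' := by ext; simp
        map_add' := by intros; ext; simp }
    exact congrFun (ih T' (fun x' y => F (Fin.cons y x')) (Fin.tail a)) (α (a 0))

lemma sh_sub (n : ℕ) {N : Type} [AddCommGroup N] 
    (F G : (Fin (n + 1) → R) → N) (a : Fin n → Aa) :
    sh n α β f (fun x => F x - G x) a = sh n α β f F a - sh n α β f G a := by
  induction n generalizing N with
  | zero => rfl
  | succ n ih =>
    simp only [sh_succ]
    have := congrFun (ih (fun x' y => F (Fin.cons y x'))
      (fun x' y => G (Fin.cons y x')) (Fin.tail a)) (α (a 0))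
    rw [Pi.sub_apply] at this
    have h2 : (fun (x' : Fin (n + 1) → R) => (fun y => F (Fin.cons y x')) - (fun y => G (Fin.cons y x')))
      = (fun x' y => F (Fin.cons y x') - G (Fin.cons y x')) := rfl
    rw [h2] at this
    rw [this]; abel

variable (m : R → R → R) (mA : Aa → Aa → Aa)
  (hα : ∀ a b, α (mA a b) = m (α a) (α b)) (hβ : ∀ a b, β (mA a b) = m (β a) (β b))
  (hf : ∀ a, m (α a) f = m f (β a))

lemma htpy_zero {N : Type} [AddCommGroup N] (l r : R → N →+ N) (F : (Fin 0 → R) → N)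
    (a : Fin 0 → Aa) :
    sh 0 α β f (bD 0 m l r F) a = l f (F (β ∘ a)) - r f (F (α ∘ a)) := by
  have : α ∘ a = β ∘ a := by ext i; exact i.elim0
  rw [this]; rfl

include hα hβ hf in
lemma htpy (n : ℕ) {N : Type} [AddCommGroup N] (l r : R → N →+ N)
    (F : (Fin (n + 1) → R) → N) (a : Fin (n + 1) → Aa) :
    bD n mA (fun x => l (α x)) (fun x => r (β x)) (sh n α β f F) a
      + sh (n + 1) α β f (bD (n + 1) m l r F) a
      = l f (F (β ∘ a)) - r f (F (α ∘ a)) := by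
  induction n generalizing N with
  | zero =>
    have hG : ∀ y : Fin 1 → R, F y = F (fun _ => y 0) := by
      intro y; congr 1; ext i; rw [Subsingleton.elim i 0]
    obtain ⟨G, hG'⟩ : ∃ G : R → N, ∀ y : Fin 1 → R, F y = G (y 0) := ⟨fun x => F (fun _ => x), hG⟩
    simp only [sh_succ, sh_zero, bD_succ, bD_zero, Pi.sub_apply, lF, rF, AddMonoidHom.coe_mk,
      ZeroHom.coe_mk, Fin.tail_cons, Fin.cons_zero, hG', hf, Function.comp_apply]
    abel
  | succ n ih =>
    have e2 : β ∘ a = Fin.cons (β (a 0)) (β ∘ Fin.tail a) := by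
      rw [← comp_cons]; simp
    have e3 : α ∘ a = Fin.cons (α (a 0)) (α ∘ Fin.tail a) := by
      rw [← comp_cons]; simp
    -- expansion of `sh (bD F)`
    have s1 : sh (n + 1 + 1) α β f (bD (n + 1 + 1) m l r F) a
        = bD (n + 1 + 1) m l r F (Fin.cons f (β ∘ a)) -
          (l (α (a 0)) (sh (n + 1) α β f F (Fin.tail a)) -
          sh (n + 1) α β f (bD (n + 1) m (lF m) (rF r) (fun x' y => F (Fin.cons y x')))
            (Fin.tail a) (α (a 0))) := by
      rw [sh_succ]
      congr 1
      let T : N →+ (R → N) :=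
        { toFun := fun v y => l y v
          map_zero' := by ext; simp
          map_add' := by intros; ext; simp }
      have h1 : (fun (x' : Fin (n + 1 + 1) → R) y => bD (n + 1 + 1) m l r F (Fin.cons y x')) =
          fun x' => T (F x') - bD (n + 1) m (lF m) (rF r) (fun x' y => F (Fin.cons y x')) x' := by
        funext x' y
        rw [bD_succ]; simp [T]
      rw [h1, sh_sub, ← sh_nat]
      rfl
    have s2 : bD (n + 1 + 1) m l r F (Fin.cons f (β ∘ a)) =
        l f (F (β ∘ a)) - (F (Fin.cons (m f (β (a 0))) (β ∘ Fin.tail a)) -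
          bD n m (lF m) (rF (rF r)) (fun x'' y1 y0 => F (Fin.cons y0 (Fin.cons y1 x'')))
            (β ∘ Fin.tail a) (β (a 0)) f) := by
      rw [bD_succ, bD_succ]
      simp only [Fin.cons_zero, Fin.tail_cons]
      rfl
    let T2 : (R → R → N) →+ (Aa → N) :=
        { toFun := fun g a0 => g (β a0) f
          map_zero' := by ext; simp
          map_add' := by intros; ext; simp }
    let T3 : (R → N) →+ (Aa → N) :=
        { toFun := fun g a0 => g (α a0)
          map_zero' := by ext; simp
          map_add' := by intros; ext; simp }
    have s3 := bD_nat n m (lF m) (rF (rF r)) mA (lF mA) (rF (fun x => r (β x))) β hβ T2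
      (by intro x v; ext y; simp [T2, lF, hβ]) (by intro x v; ext y; simp [T2, rF])
      (fun x'' y1 y0 => F (Fin.cons y0 (Fin.cons y1 x''))) (Fin.tail a)
    have s4 := bD_nat n mA (fun x => lF m (α x)) (fun x => rF r (β x)) mA
      (lF mA) (rF (fun x => r (β x))) id (fun _ _ => rfl) T3
      (by intro x v; ext y; simp [T3, lF, hα]) (by intro x v; ext y; simp [T3, rF])
      (sh n α β f (fun x' y => F (Fin.cons y x'))) (Fin.tail a)
    have s5 : bD (n + 1) mA (fun x => l (α x)) (fun x => r (β x)) (sh (n + 1) α β f F) a =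
        l (α (a 0)) (sh (n + 1) α β f F (Fin.tail a)) -
          (bD n m (lF m) (rF (rF r)) (fun x'' y1 y0 => F (Fin.cons y0 (Fin.cons y1 x'')))
            (β ∘ Fin.tail a) (β (a 0)) f
          - bD n mA (fun x => lF m (α x)) (fun x => rF r (β x))
            (sh n α β f (fun x' y => F (Fin.cons y x'))) (Fin.tail a) (α (a 0))) := by
      rw [bD_succ]
      congr 1
      have s3' := congrFun s3 (a 0)
      have s4' := congrFun s4 (a 0)
      rw [show T2 (bD n m (lF m) (rF (rF r)) (fun x'' y1 y0 => F (Fin.cons y0 (Fin.cons y1 x'')))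
        (β ∘ Fin.tail a)) (a 0) = bD n m (lF m) (rF (rF r)) (fun x'' y1 y0 => F (Fin.cons y0 (Fin.cons y1 x'')))
            (β ∘ Fin.tail a) (β (a 0)) f from rfl] at s3'
      rw [show T3 (bD n mA (fun x => lF m (α x)) (fun x => rF r (β x))
            (sh n α β f (fun x' y => F (Fin.cons y x'))) (id ∘ Fin.tail a)) (a 0) =
          bD n mA (fun x => lF m (α x)) (fun x => rF r (β x))
            (sh n α β f (fun x' y => F (Fin.cons y x'))) (Fin.tail a) (α (a 0)) from rfl] at s4'
      rw [s3', s4', ← Pi.sub_apply, ← bD_sub]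
      have s9 : (fun (x' : Fin n → Aa) y => sh (n + 1) α β f F (Fin.cons y x')) = fun x =>
        (T2 fun y1 y0 => F (Fin.cons y0 (Fin.cons y1 (β ∘ x)))) -
          T3 (sh n α β f (fun x' y => F (Fin.cons y x')) (id ∘ x)) := by
        funext x' y
        rw [sh_succ, comp_cons]
        rfl
      rw [← s9]
    have s6 := congrFun (ih (lF m) (rF r) (fun x' y => F (Fin.cons y x')) (Fin.tail a)) (α (a 0))
    rw [s5, s1, s2]
    simp only [Pi.add_apply, Pi.sub_apply] at s6
    rw [e3, ← hf]
    have s7 : lF m f (fun y => F (Fin.cons y (β ∘ Fin.tail a))) (α (a 0)) =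
      F (Fin.cons (m (α (a 0)) f) (β ∘ Fin.tail a)) := rfl
    have s8 : rF r f (fun y => F (Fin.cons y (α ∘ Fin.tail a))) (α (a 0)) =
      r f (F (Fin.cons (α (a 0)) (α ∘ Fin.tail a))) := rfl
    rw [s7, s8] at s6
    rw [eq_comm, sub_eq_iff_eq_add] at s6
    rw [s6]
    abel
end sh
end HCP

namespace HCP
open HopfCrossed

section T
variable {k C V W A M P : Type} [CommRing k] [AddCommGroup C] [Module k C] [Coalgebra k C]
  [AddCommGroup P] [Module k P] [AddCommGroup V] [Module k V] [AddCommGroup W] [Module k W]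
  [Ring A] [Algebra k A] [AddCommGroup M] [Module k M]

def tcons {n : ℕ} : V →ₗ[k] Tpow k V n →ₗ[k] Tpow k V (n + 1) :=
  TensorProduct.mk k V (Tpow k V n)

variable (k V) in
def tnil : Tpow k V 0 := (1 : k)

def tlift {n : ℕ} (B : V →ₗ[k] Tpow k V n →ₗ[k] P) : Tpow k V (n + 1) →ₗ[k] P :=
  TensorProduct.lift B

lemma tlift_tcons {n : ℕ} (B : V →ₗ[k] Tpow k V n →ₗ[k] P) (v : V) (t : Tpow k V n) :
    tlift B (tcons v t) = B v t := TensorProduct.lift.tmul _ _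

lemma tp_zero (v : Fin 0 → V) : tp k v = tnil k V := rfl

lemma tp_succ {n : ℕ} (v : Fin (n + 1) → V) : tp k v = tcons (v 0) (tp k (Fin.tail v)) := rfl

lemma tp_cons {n : ℕ} (y : V) (v : Fin n → V) :
    tp k (Fin.cons y v : Fin (n + 1) → V) = tcons y (tp k v) := by
  rw [tp_succ]; simp

lemma tpow_ext {n : ℕ} {f g : Tpow k V (n + 1) →ₗ[k] P}
    (h : ∀ v t, f (tcons v t) = g (tcons v t)) : f = g :=
  TensorProduct.ext' (M := V) (N := Tpow k V n) h

lemma tpow_ext0 {f g : Tpow k V 0 →ₗ[k] P}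
    (h : f (tnil k V) = g (tnil k V)) : f = g :=
  LinearMap.ext_ring (R := k) h

lemma tpow_ext_tp {n : ℕ} {f g : Tpow k V n →ₗ[k] P}
    (h : ∀ v, f (tp k v) = g (tp k v)) : f = g := by
  induction n generalizing P with
  | zero => exact tpow_ext0 (h Fin.elim0)
  | succ n ih =>
    apply tpow_ext
    intro v t
    have : (tcons.compr₂ f) v = (tcons.compr₂ g) v := by
      apply ih
      intro w
      have := h (Fin.cons v w)
      rw [tp_cons] at this
      exact this
    exact congrArg (fun L => L t) this

variable (k) in
lemma exists_tp {n : ℕ} (t : Tpow k V (n + 1)) : ∃ (N : ℕ) (u : Fin N → Fin (n + 1) → V),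
    t = ∑ i, tp k (u i) := by
  have hadd : ∀ m, ∀ t t' : Tpow k V (m + 1), (∃ (N : ℕ) (u : Fin N → Fin (m + 1) → V),
    t = ∑ i, tp k (u i)) → (∃ (N : ℕ) (u : Fin N → Fin (m + 1) → V),
    t' = ∑ i, tp k (u i)) → ∃ (N : ℕ) (u : Fin N → Fin (m + 1) → V),
    t + t' = ∑ i, tp k (u i) := by
    rintro m _ _ ⟨N, u, rfl⟩ ⟨N', u', rfl⟩
    exact ⟨N + N', Fin.append u u', by simp [Fin.sum_univ_add]⟩
  induction n with
  | zero =>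
    refine TensorProduct.induction_on (M := V) (N := Tpow k V 0) t ?_ ?_ (hadd 0)
    · exact ⟨0, Fin.elim0, by simp; rfl⟩
    · intro x y
      refine ⟨1, fun _ _ => (show k from y) • x, ?_⟩
      simp only [Finset.univ_unique, Finset.sum_const, Finset.card_singleton, one_smul]
      have : y = (show k from y) • tnil k V := (mul_one (show k from y)).symm
      change tcons x y = tcons ((show k from y) • x) (tnil k V)
      rw [map_smul, LinearMap.smul_apply, ← map_smul, ← this]
  | succ n ih =>
    refine TensorProduct.induction_on (M := V) (N := Tpow k V (n + 1)) t ?_ ?_ (hadd _)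
    · exact ⟨0, Fin.elim0, by simp; rfl⟩
    · intro x y
      obtain ⟨N, u, hu⟩ := ih y
      refine ⟨N, fun i => Fin.cons x (u i), ?_⟩
      simp only [tp_cons]
      change tcons x y = _
      rw [hu, map_sum]

/-- convolution of a family -/
def cv : ∀ {n : ℕ}, (Fin n → (C →ₗ[k] V)) → (C →ₗ[k] Tpow k V n)
  | 0, _ => (LinearMap.toSpanSingleton k (Tpow k V 0) (tnil k V)) ∘ₗ Coalgebra.counit
  | _ + 1, F => cvp tcons (F 0) (cv (Fin.tail F))

lemma cv_zero (F : Fin 0 → (C →ₗ[k] V)) : cv F =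
  (LinearMap.toSpanSingleton k (Tpow k V 0) (tnil k V)) ∘ₗ Coalgebra.counit := rfl

lemma cv_succ {n : ℕ} (F : Fin (n + 1) → (C →ₗ[k] V)) :
  cv F = cvp tcons (F 0) (cv (Fin.tail F)) := rfl

lemma cv_cons {n : ℕ} (y : C →ₗ[k] V) (F : Fin n → (C →ₗ[k] V)) :
    cv (Fin.cons y F : Fin (n + 1) → (C →ₗ[k] V)) = cvp tcons y (cv F) := by
  rw [cv_succ]; simp

def Tmap (q : V →ₗ[k] W) : ∀ n : ℕ, Tpow k V n →ₗ[k] Tpow k W n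
  | 0 => (LinearMap.id : k →ₗ[k] k)
  | n + 1 => tlift (tcons.compl₁₂ q (Tmap q n))

lemma Tmap_tcons (q : V →ₗ[k] W) (n : ℕ) (v : V) (t : Tpow k V n) :
    Tmap q (n + 1) (tcons v t) = tcons (q v) (Tmap q n t) := tlift_tcons _ _ _

lemma Tmap_tp (q : V →ₗ[k] W) {n : ℕ} (v : Fin n → V) :
    Tmap q n (tp k v) = tp k (fun i => q (v i)) := by
  induction n with
  | zero => rfl
  | succ n ih => rw [tp_succ, Tmap_tcons, ih]; rfl

lemma Tmap_cv (q : V →ₗ[k] W) {n : ℕ} (F : Fin n → (C →ₗ[k] V)) :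
    Tmap q n ∘ₗ cv F = cv (fun i => q ∘ₗ F i) := by
  induction n with
  | zero => rfl
  | succ n ih =>
    rw [cv_succ, cv_succ, comp_cvp]
    have : Fin.tail (fun i => q ∘ₗ F i) = fun i => q ∘ₗ Fin.tail F i := rfl
    rw [this, ← ih]
    ext c
    obtain ⟨N, u, h⟩ := exists_rep k c
    simp [cvp_rep _ _ _ h, Tmap_tcons]

lemma Tmap_surj (q : V →ₗ[k] W) (hq : Function.Surjective q) {n : ℕ}
    {f g : Tpow k W n →ₗ[k] P} (h : f ∘ₗ Tmap q n = g ∘ₗ Tmap q n) : f = g := by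
  apply tpow_ext_tp
  intro v
  choose s hs using hq
  have := congrArg (fun L => L (tp k fun i => s (v i))) h
  simpa [Tmap_tp, hs] using this

def tmapB {n n' : ℕ} : (V →ₗ[k] W) →ₗ[k] (Tpow k V n →ₗ[k] Tpow k W n') →ₗ[k]
    (Tpow k V (n + 1) →ₗ[k] Tpow k W (n' + 1)) :=
  TensorProduct.mapBilinear (.id k) V (Tpow k V n) W (Tpow k W n')

lemma tmapB_tcons {n n' : ℕ} (g : V →ₗ[k] W) (g' : Tpow k V n →ₗ[k] Tpow k W n') (v : V)
    (t : Tpow k V n) : tmapB g g' (tcons v t) = tcons (g v) (g' t) := rfl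

def actT (g : C →ₗ[k] V →ₗ[k] V) : ∀ n : ℕ, C →ₗ[k] Tpow k V n →ₗ[k] Tpow k V n
  | 0 => (LinearMap.toSpanSingleton k _ LinearMap.id) ∘ₗ Coalgebra.counit
  | n + 1 => cvp tmapB g (actT g n)

lemma actT_tp (g : C →ₗ[k] V →ₗ[k] V) {n : ℕ} (c : C) (v : Fin n → V) :
    actT g n c (tp k v) = cv (fun i => g.flip (v i)) c := by
  induction n generalizing c with
  | zero => rfl
  | succ n ih =>
    obtain ⟨N, u, h⟩ := exists_rep k c
    rw [cv_succ, actT, cvp_rep _ _ _ h, cvp_rep _ _ _ h, tp_succ]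
    simp only [LinearMap.sum_apply, tmapB_tcons, ih]
    rfl

def preB {n n' : ℕ} : V →ₗ[k] (Tpow k V n →ₗ[k] Tpow k V n') →ₗ[k]
    (Tpow k V n →ₗ[k] Tpow k V (n' + 1)) :=
  (LinearMap.llcomp k (Tpow k V n) (Tpow k V n') (Tpow k V (n' + 1))) ∘ₗ tcons

lemma preB_apply {n n' : ℕ} (v : V) (g : Tpow k V n →ₗ[k] Tpow k V n') (t) :
  preB v g t = tcons v (g t) := rfl

def Shh (α β : C →ₗ[k] V →ₗ[k] V) (f : C →ₗ[k] V) :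
    ∀ n : ℕ, C →ₗ[k] Tpow k V n →ₗ[k] Tpow k V (n + 1)
  | 0 => cvp preB f (actT β 0)
  | n + 1 => cvp preB f (actT β (n + 1)) - cvp tmapB α (Shh α β f n)

def evB : V →ₗ[k] (V →ₗ[k] M) →ₗ[k] M := LinearMap.applyₗ

lemma evB_apply (v : V) (g : V →ₗ[k] M) : evB v g = g v := rfl

def kap (q : A →ₗ[k] V) : (C →ₗ[k] (V →ₗ[k] M)) →+ ((C →ₗ[k] A) → (C →ₗ[k] M)) where
  toFun G := fun y => cvp evB (q ∘ₗ y) G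
  map_zero' := by
    ext y c
    obtain ⟨N, u, h⟩ := exists_rep k c
    simp [cvp_rep _ _ _ h]
  map_add' := by
    intros; ext y c
    obtain ⟨N, u, h⟩ := exists_rep k c
    simp [cvp_rep _ _ _ h, Finset.sum_add_distrib]

lemma kap_apply (q : A →ₗ[k] V) (G : C →ₗ[k] (V →ₗ[k] M)) (y : C →ₗ[k] A) :
    kap q G y = cvp evB (q ∘ₗ y) G := rfl

/-- currying -/
def cur {n : ℕ} (φ : Tpow k V (n + 1) →ₗ[k] M) : Tpow k V n →ₗ[k] (V →ₗ[k] M) :=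
  (tcons.compr₂ φ).flip

lemma cur_apply {n : ℕ} (φ : Tpow k V (n + 1) →ₗ[k] M) (t v) : cur φ t v = φ (tcons v t) := rfl

lemma kap_cur (q : A →ₗ[k] V) {n : ℕ} (φ : Tpow k V (n + 1) →ₗ[k] M)
    (g : C →ₗ[k] Tpow k V n) (y : C →ₗ[k] A) :
    kap q (cur φ ∘ₗ g) y = φ ∘ₗ cvp tcons (q ∘ₗ y) g := by
  ext c
  obtain ⟨N, u, h⟩ := exists_rep k c
  simp [cvp_rep _ _ _ h, kap_apply, evB_apply, cur_apply]

lemma kap_cur_cv (q : A →ₗ[k] V) {n : ℕ} (φ : Tpow k V (n + 1) →ₗ[k] M)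
    (x : Fin n → (C →ₗ[k] A)) (y : C →ₗ[k] A) :
    kap q (cur φ ∘ₗ cv (fun i => q ∘ₗ x i)) y =
     φ ∘ₗ cv (fun i => q ∘ₗ (Fin.cons y x : Fin (n + 1) → (C →ₗ[k] A)) i) := by
  rw [kap_cur, cv_succ]; rfl

lemma sh_key (q : A →ₗ[k] V) (β : C →ₗ[k] V →ₗ[k] V) (f : C →ₗ[k] A)
    (β' : A → (C →ₗ[k] A))
    (hβ : ∀ a, q ∘ₗ β' a = β.flip (q a)) (n : ℕ) (φ : Tpow k V (n + 1) →ₗ[k] M)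
    (a : Fin n → A) (c : C) :
    (φ ∘ₗ cv (fun i => q ∘ₗ (Fin.cons f (β' ∘ a) : Fin (n + 1) → (C →ₗ[k] A)) i)) c =
      φ (cvp preB (q ∘ₗ f) (actT β n) c (tp k (fun i => q (a i)))) := by
  rw [cv_succ]
  obtain ⟨N, u, h⟩ := exists_rep k c
  simp only [LinearMap.comp_apply, cvp_rep _ _ _ h, LinearMap.sum_apply, preB_apply, actT_tp]
  congr 1
  refine Finset.sum_congr rfl fun i _ => ?_
  have : Fin.tail (fun i => q ∘ₗ (Fin.cons f (β' ∘ a) : Fin (n + 1) → (C →ₗ[k] A)) i) =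
    fun i => β.flip (q (a i)) := by
    funext i; simp [Fin.tail, hβ]
  rw [this]; rfl

lemma sh_Shh (q : A →ₗ[k] V) (α β : C →ₗ[k] V →ₗ[k] V) (f : C →ₗ[k] A)
    (α' β' : A → (C →ₗ[k] A)) (hα : ∀ a, q ∘ₗ α' a = α.flip (q a))
    (hβ : ∀ a, q ∘ₗ β' a = β.flip (q a)) (n : ℕ) (φ : Tpow k V (n + 1) →ₗ[k] M)
    (a : Fin n → A) (c : C) :
    sh n α' β' f (fun X : Fin (n + 1) → (C →ₗ[k] A) => φ ∘ₗ cv (fun i => q ∘ₗ X i)) a c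
      = φ (Shh α β (q ∘ₗ f) n c (tp k (fun i => q (a i)))) := by
  induction n generalizing M c with
  | zero => rw [sh_zero]; exact sh_key q β f β' hβ 0 φ a c
  | succ n ih =>
    rw [sh_succ, LinearMap.sub_apply, sh_key q β f β' hβ, Shh, LinearMap.sub_apply, LinearMap.sub_apply, map_sub]
    congr 1
    have e : (fun (x' : Fin (n + 1) → (C →ₗ[k] A)) y => φ ∘ₗ
        cv (fun i => q ∘ₗ (Fin.cons y x' : Fin (n + 1 + 1) → (C →ₗ[k] A)) i)) =
        fun x' => kap q (cur φ ∘ₗ cv (fun i => q ∘ₗ x' i)) := by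
      funext x' y; rw [kap_cur_cv]
    rw [e, ← sh_nat, kap_apply, hα]
    obtain ⟨N, u, h⟩ := exists_rep k c
    simp only [cvp_rep _ _ _ h, LinearMap.sum_apply, map_sum]
    refine Finset.sum_congr rfl fun i _ => ?_
    rw [evB_apply, ih, cur_apply, tp_succ, tmapB_tcons]
    rfl
end T

section ext
variable {k C A M P : Type} [CommRing k] [AddCommGroup C] [Module k C] [Coalgebra k C]
  [AddCommGroup P] [Module k P] 
  [Ring A] [Algebra k A] [AddCommGroup M] [Module k M]

def la (l : A →ₗ[k] M →ₗ[k] M) (x : A) : M →+ M := (l x).toAddMonoidHom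

def LL (l : A →ₗ[k] M →ₗ[k] M) (F : C →ₗ[k] A) : (C →ₗ[k] M) →+ (C →ₗ[k] M) where
  toFun G := cvp l F G
  map_zero' := by
    ext c
    obtain ⟨N, u, h⟩ := exists_rep k c
    simp [cvp_rep _ _ _ h]
  map_add' := by
    intros; ext c
    obtain ⟨N, u, h⟩ := exists_rep k c
    simp [cvp_rep _ _ _ h, Finset.sum_add_distrib]

def RR (r : A →ₗ[k] M →ₗ[k] M) (F : C →ₗ[k] A) : (C →ₗ[k] M) →+ (C →ₗ[k] M) where
  toFun G := cvp r.flip G F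
  map_zero' := by
    ext c
    obtain ⟨N, u, h⟩ := exists_rep k c
    simp [cvp_rep _ _ _ h]
  map_add' := by
    intros; ext c
    obtain ⟨N, u, h⟩ := exists_rep k c
    simp [cvp_rep _ _ _ h, Finset.sum_add_distrib]

lemma LL_apply (l : A →ₗ[k] M →ₗ[k] M) (F : C →ₗ[k] A) (G : C →ₗ[k] M) : LL l F G = cvp l F G := rfl
lemma RR_apply (r : A →ₗ[k] M →ₗ[k] M) (F : C →ₗ[k] A) (G : C →ₗ[k] M) :
  RR r F G = cvp r.flip G F := rfl

def lHom : A →ₗ[k] (A →ₗ[k] M) →ₗ[k] (A →ₗ[k] M) :=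
  LinearMap.mk₂ k (fun x g => g ∘ₗ LinearMap.mulRight k x)
    (by intros; ext; simp [mul_add]) (by intros; ext; simp)
    (by intros; ext; simp) (by intros; ext; simp)

def rHom (r : A →ₗ[k] M →ₗ[k] M) : A →ₗ[k] (A →ₗ[k] M) →ₗ[k] (A →ₗ[k] M) :=
  LinearMap.mk₂ k (fun x g => r x ∘ₗ g)
    (by intros; ext; simp) (by intros; ext; simp)
    (by intros; ext; simp) (by intros; ext; simp)

lemma lHom_apply (x : A) (g : A →ₗ[k] M) (y : A) : lHom x g y = g (y * x) := rfl
lemma rHom_apply (r : A →ₗ[k] M →ₗ[k] M) (x : A) (g : A →ₗ[k] M) (y : A) :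
  rHom r x g y = r x (g y) := rfl

theorem ext_b (n : ℕ) (l r : A →ₗ[k] M →ₗ[k] M) (φ : Tpow k A n →ₗ[k] M)
    (ψ : Tpow k A (n + 1) →ₗ[k] M)
    (hψ : ∀ a, ψ (tp k a) = bD n (· * ·) (la l) (la r) (fun x => φ (tp k x)) a)
    (F : Fin (n + 1) → (C →ₗ[k] A)) :
    ψ ∘ₗ cv F = bD n (cvp (LinearMap.mul k A)) (LL l) (RR r) (fun X => φ ∘ₗ cv X) F := by
  induction n generalizing M with
  | zero =>
    have e : ∀ x, ψ (tcons x (tnil k A)) = l x (φ (tnil k A)) - r x (φ (tnil k A)) := by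
      intro x
      exact hψ (fun _ => x)
    rw [bD_zero]
    simp only [cv_zero, cv_succ, LL_apply, RR_apply, cvp_counit_right, ← LinearMap.comp_assoc]
    have e2 : φ ∘ₗ LinearMap.toSpanSingleton k (Tpow k A 0) (tnil k A) =
      LinearMap.toSpanSingleton k M (φ (tnil k A)) := by ext; simp
    rw [e2, cvp_counit_right, cvp_counit_left]
    ext c
    simp [e]
  | succ n ih =>
    let ψ' : Tpow k A (n + 1) →ₗ[k] (A →ₗ[k] M) := (l.compl₂ φ).flip - cur ψ
    have hψ' : ∀ t a0, ψ (tcons a0 t) = l a0 (φ t) - ψ' t a0 := by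
      intro t a0; simp [ψ', cur_apply]
    let T : (A →ₗ[k] M) →+ (A → M) :=
      { toFun := fun g y => g y
        map_zero' := by ext; simp
        map_add' := by intros; ext; simp }
    have h1 := ih lHom (rHom r) (cur φ) ψ' (by
      intro a
      ext a0
      have := hψ (Fin.cons a0 a)
      rw [tp_cons, hψ', bD_succ] at this
      simp only [Fin.cons_zero, Fin.tail_cons] at this
      have h2 : ψ' (tp k a) a0 = bD n (· * ·) (lF fun x1 x2 => x1 * x2) (rF (la r))
        (fun x' y => φ (tp k (Fin.cons y x'))) a a0 := by
        have h3 : la l a0 (φ (tp k a)) = l a0 (φ (tp k a)) := rfl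
        rw [h3] at this
        exact sub_right_injective this
      rw [h2]
      have h4 := bD_nat n (X := A) (· * ·) (la lHom) (la (rHom r)) (· * ·)
        (lF fun x1 x2 => x1 * x2) (rF (la r)) id (fun _ _ => rfl) T (fun _ _ => rfl) (fun _ _ => rfl)
        (fun x => cur φ (tp k x)) a
      have h5 := congrFun h4 a0
      refine Eq.trans ?_ h5.symm
      congr 1) (Fin.tail F)
    have e0 : ∀ y : C →ₗ[k] A, (LinearMap.id : A →ₗ[k] A) ∘ₗ y = y := fun y => rfl
    rw [bD_succ]
    have h6 : ψ ∘ₗ cv F = cvp l (F 0) (φ ∘ₗ cv (Fin.tail F)) -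
        kap LinearMap.id (ψ' ∘ₗ cv (Fin.tail F)) (F 0) := by
      rw [cv_succ, kap_apply, e0]
      ext c
      obtain ⟨N, u, h⟩ := exists_rep k c
      simp [cvp_rep _ _ _ h, evB_apply, hψ']
    rw [h6, h1]
    congr 1
    have h7 := bD_nat n (cvp (C := C) (LinearMap.mul k A)) (LL lHom) (RR (rHom r))
      (cvp (LinearMap.mul k A)) (lF (cvp (LinearMap.mul k A))) (rF (RR r)) id (fun _ _ => rfl)
      (kap LinearMap.id) (by
        intro x v
        funext y
        simp only [kap_apply, e0, LL_apply, lF, AddMonoidHom.coe_mk, ZeroHom.coe_mk, id]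
        refine (cvp_assoc evB (LinearMap.mul k A) evB lHom _ _ _ ?_).symm
        intros; rfl) (by
        intro x v
        funext y
        simp only [kap_apply, e0, RR_apply, rF, AddMonoidHom.coe_mk, ZeroHom.coe_mk, id]
        refine (cvp_assoc r.flip evB evB (rHom r).flip _ _ _ ?_).symm
        intros; rfl) (fun X => cur φ ∘ₗ cv X) (Fin.tail F)
    have h8 := congrFun h7 (F 0)
    refine h8.trans ?_
    have h9 : (fun x' => kap LinearMap.id (cur φ ∘ₗ cv (id ∘ x'))) =
      fun (x' : Fin n → (C →ₗ[k] A)) y => φ ∘ₗ cv (Fin.cons y x' : Fin (n + 1) → (C →ₗ[k] A)) := by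
      funext x' y
      rw [Function.id_comp, kap_cur, e0, cv_cons]
    rw [h9]
end ext
end HCP

namespace HCP
open HopfCrossed

section gen
variable {k C P Q X Y Z : Type} [CommRing k] [AddCommGroup C] [Module k C] [Coalgebra k C]
  [AddCommGroup P] [Module k P] [AddCommGroup Q] [Module k Q] [AddCommGroup X] [Module k X]
  [AddCommGroup Y] [Module k Y] [AddCommGroup Z] [Module k Z]

/-- the unit for convolution -/
def un (x : X) : C →ₗ[k] X := (LinearMap.toSpanSingleton k X x) ∘ₗ Coalgebra.counit

lemma un_apply (x : X) (c : C) : un (k := k) x c = Coalgebra.counit (R := k) c • x := rfl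

lemma cvp_un_left (B : X →ₗ[k] Y →ₗ[k] Z) (x : X) (G : C →ₗ[k] Y) :
    cvp B (un x) G = B x ∘ₗ G := cvp_counit_left _ _ _

lemma cvp_un_right (B : X →ₗ[k] Y →ₗ[k] Z) (y : Y) (G : C →ₗ[k] X) :
    cvp B G (un y) = B.flip y ∘ₗ G := cvp_counit_right _ _ _

def cvpL (B : X →ₗ[k] Y →ₗ[k] Z) : (C →ₗ[k] X) →ₗ[k] (C →ₗ[k] Y) →ₗ[k] (C →ₗ[k] Z) :=
  LinearMap.mk₂ k (cvp B)
    (by intros; ext c; obtain ⟨N, u, h⟩ := exists_rep k c; simp [cvp_rep _ _ _ h, Finset.sum_add_distrib])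
    (by intros; ext c; obtain ⟨N, u, h⟩ := exists_rep k c; simp [cvp_rep _ _ _ h, Finset.smul_sum])
    (by intros; ext c; obtain ⟨N, u, h⟩ := exists_rep k c; simp [cvp_rep _ _ _ h, Finset.sum_add_distrib])
    (by intros; ext c; obtain ⟨N, u, h⟩ := exists_rep k c; simp [cvp_rep _ _ _ h, Finset.smul_sum])

lemma cvpL_apply (B : X →ₗ[k] Y →ₗ[k] Z) (F : C →ₗ[k] X) (G : C →ₗ[k] Y) :
  cvpL B F G = cvp B F G := rfl

lemma cvp_sw_left (B : X →ₗ[k] Y →ₗ[k] Z) (T : C →ₗ[k] C →ₗ[k] X) (G : C →ₗ[k] Y) :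
    cvp B (sw T) G = sw ((cvpL B).flip G ∘ₗ T) := by
  have h1 : cvp B (sw T) G = sw (sw (T.compr₂ (B.compl₂ G))) := by
    rw [cvp, ← comp_sw]; rfl
  rw [h1, sw_sw]
  congr 1

lemma cvp_sw_right (B : X →ₗ[k] Y →ₗ[k] Z) (F : C →ₗ[k] X) (K : C →ₗ[k] C →ₗ[k] Y)
    (T : C →ₗ[k] C →ₗ[k] C →ₗ[k] Z) (hT : ∀ x y z, T x y z = B (F x) (K y z)) :
    cvp B F (sw K) = sw (sw ∘ₗ T) := by
  rw [cvp]; congr 1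
  ext x c
  obtain ⟨N, u, h⟩ := exists_rep k c
  simp [sw_rep _ h, hT]

lemma sw_ext {B B' : C →ₗ[k] C →ₗ[k] P} (h : ∀ x y, B x y = B' x y) : sw B = sw B' := by
  congr 1; ext x y; exact h x y

lemma sw_group {T : C →ₗ[k] C →ₗ[k] C →ₗ[k] P} (g : C →ₗ[k] P)
    (h : ∀ z c, sw (T.compr₂ (LinearMap.applyₗ z)) c = Coalgebra.counit (R := k) c • g z) :
    sw (sw ∘ₗ T) = g := by
  rw [← sw_sw]
  apply sw_counit_left
  intro x y
  rw [← h y x, ← comp_sw]; rfl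

variable {R : Type} [Ring R] [Algebra k R]

def cm (F G : C →ₗ[k] R) : C →ₗ[k] R := cvp (LinearMap.mul k R) F G

lemma cm_assoc (F G K : C →ₗ[k] R) : cm (cm F G) K = cm F (cm G K) :=
  cvp_assoc _ _ _ _ _ _ _ (fun x y z => mul_assoc x y z)

lemma un_cm (F : C →ₗ[k] R) : cm (un 1) F = F := by
  rw [cm, cvp_un_left]; ext; simp

lemma cm_un (F : C →ₗ[k] R) : cm F (un 1) = F := by
  rw [cm, cvp_un_right]; ext; simp

lemma cm_rep (F G : C →ₗ[k] R) {c : C} {N : ℕ} {u : Fin N → Fin 2 → C}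
    (h : Coalgebra.comul (R := k) c = ∑ i, u i 0 ⊗ₜ[k] u i 1) :
    cm F G c = ∑ i, F (u i 0) * G (u i 1) := cvp_rep _ _ _ h

end gen

section hopf
variable {k H P : Type} [CommRing k] [Ring H] [HopfAlgebra k H] [AddCommGroup P] [Module k P]

abbrev ant : H →ₗ[k] H := HopfAlgebra.antipode k

lemma cm_ant_id : cm (ant (k := k) (H := H)) LinearMap.id = un 1 := by
  ext c
  obtain ⟨N, u, h⟩ := exists_rep k c
  have := LinearMap.congr_fun (HopfAlgebra.mul_antipode_rTensor_comul (R := k) (A := H)) c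
  simp [h] at this
  rw [cm_rep _ _ h]
  simp [this, un_apply, Algebra.smul_def]

lemma cm_id_ant : cm LinearMap.id (ant (k := k) (H := H)) = un 1 := by
  ext c
  obtain ⟨N, u, h⟩ := exists_rep k c
  have := LinearMap.congr_fun (HopfAlgebra.mul_antipode_lTensor_comul (R := k) (A := H)) c
  simp [h] at this
  rw [cm_rep _ _ h]
  simp [this, un_apply, Algebra.smul_def]

lemma sw_ant_left (g : H →ₗ[k] P) {B : H →ₗ[k] H →ₗ[k] P} (hB : ∀ x y, B x y = g (ant (k := k) x * y))
   (c : H) : sw B c = Coalgebra.counit (R := k) c • g 1 := by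
  have : sw B = g ∘ₗ cm (ant (k := k)) LinearMap.id := by
    rw [cm, comp_cvp]; exact sw_ext hB
  rw [this, cm_ant_id]; simp [un_apply]

lemma sw_ant_right (g : H →ₗ[k] P) {B : H →ₗ[k] H →ₗ[k] P} (hB : ∀ x y, B x y = g (x * ant (k := k) y))
   (c : H) : sw B c = Coalgebra.counit (R := k) c • g 1 := by
  have : sw B = g ∘ₗ cm LinearMap.id (ant (k := k)) := by
    rw [cm, comp_cvp]; exact sw_ext hB
  rw [this, cm_id_ant]; simp [un_apply]

def tfl : H →ₗ[k] H →ₗ[k] H ⊗[k] H := ((TensorProduct.mk k H H).compl₁₂ ant ant).flip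

lemma tfl_apply (x y : H) : tfl (k := k) x y = ant (k := k) y ⊗ₜ[k] ant (k := k) x := rfl

lemma comul_as_sw : (Coalgebra.comul (R := k) : H →ₗ[k] H ⊗[k] H) = sw (TensorProduct.mk k H H) := by
  ext c; obtain ⟨N, u, h⟩ := exists_rep k c
  rw [sw_rep _ h, h]; rfl

lemma tfl_comul : cm (sw tfl) (Coalgebra.comul (R := k) (A := H)) = un 1 := by
  rw [cm, cvp_sw_left]
  have : ∀ x : H, (((cvpL (LinearMap.mul k (H ⊗[k] H))).flip (Coalgebra.comul (R := k) (A := H)) ∘ₗ tfl) x)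
     = (TensorProduct.mk k H H 1) ∘ₗ LinearMap.mulLeft k (ant (k := k) x) := by
    intro x
    simp only [LinearMap.comp_apply, LinearMap.flip_apply, cvpL_apply]
    rw [comul_as_sw]
    rw [cvp_sw_right _ _ _ (((LinearMap.mk₂ k (fun y z =>
      TensorProduct.mk k H H (ant (k := k) y * z) ∘ₗ LinearMap.mulLeft k (ant (k := k) x)))
      (by intros; ext; simp [add_mul, TensorProduct.add_tmul]) (by intros; ext; simp [TensorProduct.smul_tmul'])
      (by intros; ext; simp [mul_add, TensorProduct.add_tmul]) (by intros; ext; simp [TensorProduct.smul_tmul']))) (by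
        intro a b c; simp [tfl_apply])]
    apply sw_group
    intro z c
    rw [sw_ant_left ((TensorProduct.mk k H H).flip (ant (k := k) x * z))]
    · simp
    · intro x y; simp
  ext c
  rw [sw_ant_left (TensorProduct.mk k H H 1)]
  · simp [un_apply, Algebra.TensorProduct.one_def]
  · intro x y
    rw [this]; rfl

lemma comul_ant : (Coalgebra.comul (R := k) (A := H)) ∘ₗ ant = sw tfl := by
  have h2 : cm (Coalgebra.comul (R := k) (A := H)) (Coalgebra.comul ∘ₗ ant) = un 1 := by
    have : cm (Coalgebra.comul (R := k) (A := H)) (Coalgebra.comul ∘ₗ ant) =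
      Coalgebra.comul ∘ₗ (cm LinearMap.id ant) := by
      ext c; obtain ⟨N, u, h⟩ := exists_rep k c
      simp [cm_rep _ _ h]
    rw [this, cm_id_ant]; ext c; simp [un_apply]
  rw [← un_cm (Coalgebra.comul (R := k) (A := H) ∘ₗ ant), ← tfl_comul, cm_assoc, h2, cm_un]

lemma sw_ant (B : H →ₗ[k] H →ₗ[k] P) (c : H) :
    sw B (ant (k := k) c) = sw ((B.compl₁₂ ant ant).flip) c := by
  have := LinearMap.congr_fun (comul_ant (k := k) (H := H)) c
  rw [LinearMap.comp_apply] at this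
  rw [sw_apply, this]
  obtain ⟨N, u, h⟩ := exists_rep k c
  simp [sw_rep _ h, tfl_apply]

end hopf
end HCP

set_option linter.unusedSimpArgs false
set_option linter.unusedSectionVars false
namespace HCP
open HopfCrossed

section rep
variable {k C P : Type} [CommRing k] [AddCommGroup C] [Module k C] [Coalgebra k C]
  [AddCommGroup P] [Module k P]

lemma itComul_zero (c : C) : itComul k 0 c = tcons c (tnil k C) := rfl

lemma itComul_succ (n : ℕ) {c : C} {N : ℕ} {u : Fin N → Fin 2 → C}
    (h : Coalgebra.comul (R := k) c = ∑ i, u i 0 ⊗ₜ[k] u i 1) :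
    itComul k (n + 1) c = ∑ i, tcons (u i 0) (itComul k n (u i 1)) := by
  have h0 : itComul k (n + 1) c =
    TensorProduct.map LinearMap.id (itComul k n) (Coalgebra.comul (R := k) c) := rfl
  refine h0.trans ?_
  rw [h, map_sum]
  rfl

lemma srep1 {c : C} {N : ℕ} {u : Fin N → Fin 2 → C}
    (h : Coalgebra.comul (R := k) c = ∑ i, u i 0 ⊗ₜ[k] u i 1) : SRep k 1 c N u := by
  rw [SRep, itComul_succ 0 h]
  rfl

lemma tlift_itComul (n : ℕ) (B : C →ₗ[k] Tpow k C (n + 1) →ₗ[k] P) (c : C) :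
    tlift B (itComul k (n + 1) c) = sw (B.compl₂ (itComul k n)) c := by
  obtain ⟨N, u, h⟩ := exists_rep k c
  rw [sw_rep _ h, itComul_succ n h, map_sum]
  simp only [tlift_tcons]
  rfl

def tsc : P →ₗ[k] Tpow k C 0 →ₗ[k] P := (LinearMap.lsmul k P).flip

lemma tsc_nil (p : P) : tsc (k := k) p (tnil k C) = p := one_smul k p

lemma tlift_itComul0 (g : C →ₗ[k] P) (c : C) :
    tlift (tsc ∘ₗ g) (itComul k 0 c) = g c := by
  have : itComul k 0 c = tcons c (tnil k C) := rfl
  rw [this, tlift_tcons, LinearMap.comp_apply, tsc_nil]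

def tliftL {n : ℕ} : (C →ₗ[k] Tpow k C n →ₗ[k] P) →ₗ[k] (Tpow k C (n + 1) →ₗ[k] P) :=
  (TensorProduct.lift.equiv (.id k) C (Tpow k C n) P).toLinearMap

lemma tliftL_apply {n : ℕ} (B : C →ₗ[k] Tpow k C n →ₗ[k] P) : tliftL B = tlift B := rfl

def post {X Y : Type} [AddCommGroup X] [Module k X] [AddCommGroup Y] [Module k Y]
  (T : X →ₗ[k] Y) : (C →ₗ[k] X) →ₗ[k] (C →ₗ[k] Y) := LinearMap.llcomp k C X Y T

def tl1 : (C →ₗ[k] P) →ₗ[k] (Tpow k C 1 →ₗ[k] P) :=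
  tliftL ∘ₗ post (C := C) (tsc (C := C) (P := P))
def tl2 : (C →ₗ[k] C →ₗ[k] P) →ₗ[k] (Tpow k C 2 →ₗ[k] P) := tliftL ∘ₗ post (C := C) (tl1 (C := C) (P := P))
def tl3 : (C →ₗ[k] C →ₗ[k] C →ₗ[k] P) →ₗ[k] (Tpow k C 3 →ₗ[k] P) := tliftL ∘ₗ post (C := C) (tl2 (C := C) (P := P))

lemma tl1_tp (B : C →ₗ[k] P) (v : Fin 1 → C) : tl1 B (tp k v) = B (v 0) := tsc_nil (C := C) _
lemma tl2_tp (B : C →ₗ[k] C →ₗ[k] P) (v : Fin 2 → C) : tl2 B (tp k v) = B (v 0) (v 1) :=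
  tl1_tp (B (v 0)) (Fin.tail v)
lemma tl3_tp (B : C →ₗ[k] C →ₗ[k] C →ₗ[k] P) (v : Fin 3 → C) :
  tl3 B (tp k v) = B (v 0) (v 1) (v 2) :=
  tl2_tp (B (v 0)) (Fin.tail v)

lemma tl2_it (B : C →ₗ[k] C →ₗ[k] P) (c : C) : tl2 B (itComul k 1 c) = sw B c := by
  refine (tlift_itComul 0 (post tl1 B) c).trans ?_
  congr 1; congr 1
  ext x y
  exact tlift_itComul0 (B x) y

lemma tl3_it (B : C →ₗ[k] C →ₗ[k] C →ₗ[k] P) (c : C) :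
    tl3 B (itComul k 2 c) = sw (sw ∘ₗ B) c := by
  refine (tlift_itComul 1 (post tl2 B) c).trans ?_
  congr 1; congr 1
  ext x y
  exact tl2_it (B x) y

lemma srep2_sum {c : C} {N : ℕ} {u : Fin N → Fin 3 → C} (h : SRep k 2 c N u)
    (B : C →ₗ[k] C →ₗ[k] C →ₗ[k] P) :
    ∑ i, B (u i 0) (u i 1) (u i 2) = sw (sw ∘ₗ B) c := by
  rw [← tl3_it, h, map_sum]
  simp only [tl3_tp]

lemma exists_srep (n : ℕ) (c : C) : ∃ N u, SRep k n c N u := exists_tp k (itComul k n c)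

end rep

section cp
variable {k A H E : Type} [CommRing k] [Ring A] [Algebra k A] [Ring H] [HopfAlgebra k H]
  [Ring E] [Algebra k E] (S : CrossedProduct k A H E)

lemma aE_one : S.aE 1 = 1 := S.ι_one
lemma hE_one : S.hE 1 = 1 := S.ι_one

lemma srep_one2 : SRep k 2 (1 : H) 1 (fun _ _ => 1) := by
  let w : Fin 1 → Fin 2 → H := fun _ _ => 1
  have h : Coalgebra.comul (R := k) (1 : H) = ∑ i, w i 0 ⊗ₜ[k] w i 1 := by
    simp only [w]
    simp [Bialgebra.comul_one, Algebra.TensorProduct.one_def]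
  rw [SRep, itComul_succ 1 h]
  simp only [w, itComul_succ 0 h]
  simp; rfl

lemma st (r : k) (a : A) (h : H) : (r • a) ⊗ₜ[k] h = r • (a ⊗ₜ[k] h) := rfl

lemma srep_one1 : SRep k 1 (1 : H) 1 (fun _ _ => 1) := by
  apply srep1; simp [Bialgebra.comul_one, Algebra.TensorProduct.one_def]

lemma aE_mul (a b : A) : S.aE (a * b) = S.aE a * S.aE b := by
  have := S.ι_mul a b 1 1 1 1 _ _ (srep_one2 (k := k)) (srep_one1 (k := k))
  simp [S.one_act, (S.f_normal 1).1] at this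
  exact this.symm

lemma ι_eq (a : A) (h : H) : S.ι (a ⊗ₜ h) = S.aE a * S.hE h := by
  obtain ⟨N, u, hu⟩ := exists_rep k h
  have := S.ι_mul a 1 1 h 1 N _ _ (srep_one2 (k := k)) (srep1 hu)
  simp [S.one_act, (S.f_normal _).2] at this
  refine Eq.trans ?_ this.symm
  have h2 := sw_counit_left (k := k) (B := LinearMap.mk₂ k (fun x y => S.ι ((Coalgebra.counit (R := k) x • a) ⊗ₜ y))
    (by intros; simp [add_smul, TensorProduct.add_tmul]) (by intros; simp [mul_smul, st])
    (by intros; simp [TensorProduct.tmul_add]) (by intros; simp)) (S.ι.toLinearMap ∘ₗ TensorProduct.mk k A H a)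
    (by intros; simp [st])
  have h3 := LinearMap.congr_fun h2 h
  rw [sw_rep _ hu] at h3
  simp at h3
  simp [← h3]

/-- left mult action map `x ↦ a^x` -/
def alp (a : A) : H →ₗ[k] A := S.act.flip a

lemma alp_apply (a : A) (h : H) : alp S a h = S.act h a := rfl

lemma hE_aE (a : A) : (LinearMap.mulRight k (S.aE a)) ∘ₗ S.hE = cm (S.aE ∘ₗ alp S a) S.hE := by
  ext h
  obtain ⟨N, u, hu⟩ := exists_srep (k := k) 2 h
  have := S.ι_mul 1 a h 1 N 1 _ _ hu (srep_one1 (k := k))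
  simp [(S.f_normal _).1] at this
  refine Eq.trans this ?_
  let B : H →ₗ[k] H →ₗ[k] H →ₗ[k] E := LinearMap.mk₂ k (fun x y =>
    S.ι.toLinearMap ∘ₗ TensorProduct.mk k A H (Coalgebra.counit (R := k) y • S.act x a))
      (by intros; ext; simp [TensorProduct.add_tmul]) (by intros; ext; simp [st]; exact smul_comm _ _ _)
      (by intros; ext; simp [add_smul, TensorProduct.add_tmul]) (by intros; ext; simp [mul_smul, st])
  have h3 := srep2_sum hu B
  refine Eq.trans (by simp [B, st]) (h3.trans ?_)
  congr 1
  rw [cm, cvp]; congr 1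
  ext x y
  have : sw (B x) = S.ι.toLinearMap ∘ₗ TensorProduct.mk k A H (S.act x a) := by
    apply sw_counit_left; intros; simp [B, st]
  simp [this, ι_eq, alp_apply]

/-- `f` on `H ⊗ H`, into `E` -/
def fE : H ⊗[k] H →ₗ[k] E := S.aE ∘ₗ TensorProduct.lift S.f
def γm : H ⊗[k] H →ₗ[k] E := S.hE ∘ₗ LinearMap.mul' k H
def γ2 : H ⊗[k] H →ₗ[k] E := TensorProduct.lift ((LinearMap.mul k E).compl₁₂ S.hE S.hE)

lemma comul_tt {h l : H} {N N' : ℕ} {u : Fin N → Fin 2 → H} {v : Fin N' → Fin 2 → H}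
    (hu : Coalgebra.comul (R := k) h = ∑ i, u i 0 ⊗ₜ[k] u i 1)
    (hv : Coalgebra.comul (R := k) l = ∑ i, v i 0 ⊗ₜ[k] v i 1) :
    Coalgebra.comul (R := k) (h ⊗ₜ[k] l) =
      ∑ i, ∑ j, (u i 0 ⊗ₜ[k] v j 0) ⊗ₜ[k] (u i 1 ⊗ₜ[k] v j 1) := by
  rw [TensorProduct.comul_tmul, hu, hv]
  simp [TensorProduct.sum_tmul, TensorProduct.tmul_sum]
  rw [Finset.sum_comm]

lemma cvp_tt {X Y Z : Type} [AddCommGroup X] [Module k X]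
  [AddCommGroup Y] [Module k Y] [AddCommGroup Z] [Module k Z]
    {h l : H} {N N' : ℕ} {u : Fin N → Fin 2 → H} {v : Fin N' → Fin 2 → H}
    (hu : Coalgebra.comul (R := k) h = ∑ i, u i 0 ⊗ₜ[k] u i 1)
    (hv : Coalgebra.comul (R := k) l = ∑ i, v i 0 ⊗ₜ[k] v i 1)
    (B : X →ₗ[k] Y →ₗ[k] Z) (F : H ⊗[k] H →ₗ[k] X) (G : H ⊗[k] H →ₗ[k] Y) :
    cvp B F G (h ⊗ₜ[k] l) = ∑ i, ∑ j, B (F (u i 0 ⊗ₜ[k] v j 0)) (G (u i 1 ⊗ₜ[k] v j 1)) := by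
  rw [cvp, sw_apply, comul_tt hu hv]; simp

lemma γ2_eq : γ2 S = cm (fE S) (γm S) := by
  ext h l
  obtain ⟨N', v, hv⟩ := exists_rep k l
  obtain ⟨N, u, hu⟩ := exists_rep k h
  obtain ⟨N3, w, hw⟩ := exists_srep (k := k) 2 h
  have := S.ι_mul 1 1 h l N3 N' _ _ hw (srep1 hv)
  simp [S.act_one] at this
  simp only [TensorProduct.AlgebraTensorModule.curry_apply, LinearMap.restrictScalars_self,
    TensorProduct.curry_apply]
  rw [cm, cvp_tt hu hv]
  refine Eq.trans (show γ2 S (h ⊗ₜ l) = S.ι (1 ⊗ₜ[k] h) * S.ι (1 ⊗ₜ[k] l) from rfl) (this.trans ?_)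
  rw [Finset.sum_comm, Finset.sum_comm (s := Finset.univ (α := Fin N))]
  refine Finset.sum_congr rfl fun j _ => ?_
  let B : H →ₗ[k] H →ₗ[k] E := LinearMap.mk₂ k (fun y z =>
    S.ι (S.f y (v j 0) ⊗ₜ[k] (z * v j 1)))
      (by intros; simp [TensorProduct.add_tmul]) (by intros; simp [st])
      (by intros; simp [add_mul, TensorProduct.tmul_add]) (by intros; simp)
  have h3 := srep2_sum hw ((LinearMap.lsmul k (H →ₗ[k] H →ₗ[k] E)).flip B ∘ₗ Coalgebra.counit)
  have h4 : sw (sw ∘ₗ ((LinearMap.lsmul k (H →ₗ[k] H →ₗ[k] E)).flip B ∘ₗ Coalgebra.counit)) = sw B := by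
    apply sw_counit_left; intro x y; simp
  rw [h4, sw_rep _ hu] at h3
  simp [B] at h3
  refine Eq.trans ?_ (h3.trans ?_)
  · simp [st]
  · simp [fE, γm, ι_eq]

end cp
end HCP

set_option linter.unusedSimpArgs false
set_option linter.unusedSectionVars false
namespace HCP
open HopfCrossed

section sand
variable {k C P Q R : Type} [CommRing k] [AddCommGroup C] [Module k C] [Coalgebra k C]
  [AddCommGroup P] [Module k P] [AddCommGroup Q] [Module k Q] [AddCommGroup R] [Module k R]

lemma sand (B : P →ₗ[k] Q →ₗ[k] R) (g : C →ₗ[k] C →ₗ[k] P) (g' : C →ₗ[k] C →ₗ[k] Q) (q : Q)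
    (hg' : sw g' = un q) (G : C →ₗ[k] C →ₗ[k] R)
    (hG : ∀ (x y : C) (N N' : ℕ) (u : Fin N → Fin 2 → C) (v : Fin N' → Fin 2 → C),
      Coalgebra.comul (R := k) x = ∑ i, u i 0 ⊗ₜ[k] u i 1 →
      Coalgebra.comul (R := k) y = ∑ i, v i 0 ⊗ₜ[k] v i 1 →
      G x y = ∑ i, ∑ j, B (g (u i 0) (v j 1)) (g' (u i 1) (v j 0))) :
    sw G = B.flip q ∘ₗ sw g := by
  let N : C →ₗ[k] C →ₗ[k] C →ₗ[k] C →ₗ[k] R :=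
    LinearMap.mk₂ k (fun x1 x2 => LinearMap.mk₂ k (fun y1 y2 => B (g x1 y2) (g' x2 y1))
      (by intros; simp) (by intros; simp) (by intros; simp) (by intros; simp))
      (by intros; ext; simp) (by intros; ext; simp) (by intros; ext; simp) (by intros; ext; simp)
  have hN : ∀ a b c d, N a b c d = B (g a d) (g' b c) := fun _ _ _ _ => rfl
  have h1 : G = sw (N.compr₂ sw) := by
    ext x y
    obtain ⟨n, u, hu⟩ := exists_rep k x
    obtain ⟨n', v, hv⟩ := exists_rep k y
    rw [hG x y _ _ u v hu hv, sw_rep _ hu]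
    simp [sw_rep _ hv, hN]
  rw [h1, sw_sw, comp_sw]
  congr 1
  ext x1 : 1
  have h2 : (sw ∘ₗ N.compr₂ sw) x1 = sw (sw ∘ₗ N x1) := rfl
  rw [h2]
  apply sw_group
  intro z c
  obtain ⟨n, u, hu⟩ := exists_rep k c
  have h3 := LinearMap.congr_fun hg' c
  rw [sw_rep _ hu, un_apply] at h3
  rw [sw_rep _ hu]
  simp only [LinearMap.compr₂_apply, LinearMap.applyₗ_apply_apply, hN, LinearMap.flip_apply,
    ← map_sum, h3, map_smul]

end sand

section cp
variable {k A H E : Type} [CommRing k] [Ring A] [Algebra k A] [Ring H] [HopfAlgebra k H]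
  [Ring E] [Algebra k E] (S : CrossedProduct k A H E) (finv : H →ₗ[k] H →ₗ[k] A)

def fiE : H ⊗[k] H →ₗ[k] E := S.aE ∘ₗ TensorProduct.lift finv

lemma fE_fiE (hfinv : IsConvInverse S.f finv) :
    cm (fE S) (fiE S finv) = un 1 ∧ cm (fiE S finv) (fE S) = un 1 := by
  constructor <;>
  · ext h l
    obtain ⟨n, u, hu⟩ := exists_rep k h
    obtain ⟨n', v, hv⟩ := exists_rep k l
    have := hfinv h l _ _ u v (srep1 hu) (srep1 hv)
    simp only [TensorProduct.AlgebraTensorModule.curry_apply, LinearMap.restrictScalars_self,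
      TensorProduct.curry_apply]
    rw [cm, cvp_tt hu hv]
    simp only [fE, fiE, LinearMap.comp_apply, TensorProduct.lift.tmul, LinearMap.mul_apply',
      ← aE_mul, ← map_sum, this, map_smul, aE_one, un_apply, TensorProduct.counit_tmul]
    simp [mul_comm]

lemma γm_eq (hfinv : IsConvInverse S.f finv) : γm S = cm (fiE S finv) (γ2 S) := by
  rw [γ2_eq, ← cm_assoc, (fE_fiE S finv hfinv).2, un_cm]

def T3 : H →ₗ[k] H →ₗ[k] H →ₗ[k] E :=
  LinearMap.mk₂ k (fun x y => S.ι.toLinearMap ∘ₗ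
    ((TensorProduct.mk k A H).flip (ant (k := k) x)) ∘ₗ finv (ant (k := k) y))
    (by intros; ext; simp [TensorProduct.tmul_add]) (by intros; ext; simp)
    (by intros; ext; simp [TensorProduct.add_tmul]) (by intros; ext; simp [st])

lemma T3_apply (x y z : H) : T3 S finv x y z =
    S.ι ((finv (ant (k := k) y) z) ⊗ₜ[k] ant (k := k) x) := rfl

def mu : H →ₗ[k] E := sw (sw ∘ₗ T3 S finv)

lemma mu_ga (hfinv : IsConvInverse S.f finv) : cm (mu S finv) S.hE = un 1 := by
  let M0 : E →ₗ[k] (H →ₗ[k] E) := (LinearMap.mul k E).compl₂ S.hE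
  let T4 : H →ₗ[k] H →ₗ[k] H →ₗ[k] H →ₗ[k] E := (T3 S finv).compr₂ (post M0)
  have hT4 : ∀ x y z w, T4 x y z w = T3 S finv x y z * S.hE w := fun _ _ _ _ => rfl
  have h1 : cm (mu S finv) S.hE = sw (sw ∘ₗ T4.compr₂ sw) := by
    rw [cm, mu, cvp_sw_left]
    congr 1
    ext x : 1
    simp only [LinearMap.comp_apply, LinearMap.flip_apply, cvpL_apply]
    rw [cvp_sw_left]
    rfl
  rw [h1, ← sw_sw]
  ext c
  rw [sw_ant_left S.hE, hE_one, un_apply]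
  intro x y
  obtain ⟨n, u, hu⟩ := exists_rep k x
  obtain ⟨n', v, hv⟩ := exists_rep k y
  have hu' : Coalgebra.comul (R := k) (ant (k := k) x) =
    ∑ i, (fun i => ![ant (k := k) (u i 1), ant (k := k) (u i 0)]) i 0 ⊗ₜ[k]
      (fun i => ![ant (k := k) (u i 1), ant (k := k) (u i 0)]) i 1 := by
    have := LinearMap.congr_fun (comul_ant (k := k) (H := H)) x
    rw [LinearMap.comp_apply] at this
    rw [this, sw_rep _ hu]
    simp [tfl_apply]
  have h2 : S.hE (ant (k := k) x * y) = γm S (ant (k := k) x ⊗ₜ y) := rfl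
  rw [h2, γm_eq S finv hfinv, cm, cvp_tt hu' hv, sw_rep _ hu]
  simp [sw_rep _ hv, hT4, T3_apply, ι_eq, fiE, γ2, mul_assoc]

/-- `g(h) = f(h₁, S h₂)` -/
def gg : H →ₗ[k] A := sw (S.f.compl₂ ant)

lemma ga_gaS : cm S.hE (S.hE ∘ₗ ant) = S.aE ∘ₗ gg S := by
  have := sand (LinearMap.mul k E) (S.f.compr₂ S.aE |>.compl₂ ant)
    (((LinearMap.mul k H).compl₂ ant).compr₂ S.hE) 1 (by
      ext c; rw [sw_ant_right S.hE, hE_one, un_apply]; intros; rfl)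
    ((LinearMap.mul k E).compl₁₂ S.hE (S.hE ∘ₗ ant)) (by
      intro x y n n' u v hu hv
      have hv' : Coalgebra.comul (R := k) (ant (k := k) y) =
        ∑ i, (fun i => ![ant (k := k) (v i 1), ant (k := k) (v i 0)]) i 0 ⊗ₜ[k]
          (fun i => ![ant (k := k) (v i 1), ant (k := k) (v i 0)]) i 1 := by
        have := LinearMap.congr_fun (comul_ant (k := k) (H := H)) y
        rw [LinearMap.comp_apply] at this
        rw [this, sw_rep _ hv]
        simp [tfl_apply]
      have h2 : ((LinearMap.mul k E).compl₁₂ S.hE (S.hE ∘ₗ ant)) x y =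
        γ2 S (x ⊗ₜ ant (k := k) y) := rfl
      rw [h2, γ2_eq, cm, cvp_tt hu hv']
      simp [fE, γm])
  refine Eq.trans this ?_
  rw [gg, comp_sw, comp_sw]
  apply sw_ext
  intro x y
  simp

def rho : H →ₗ[k] A := sw (finv ∘ₗ ant)

lemma mu_eq (T : H →ₗ[k] H →ₗ[k] E) (hT : ∀ y c, T y c = S.aE (rho finv c) * S.hE (ant (k := k) y)) :
    mu S finv = sw T := by
  rw [mu]; congr 1
  ext y c
  obtain ⟨n, u, hu⟩ := exists_rep k c
  simp [hT, rho, sw_rep _ hu, T3_apply, ι_eq, Finset.sum_mul]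

lemma hE_aE' (a : A) : cm S.hE (un (S.aE a)) = cm (S.aE ∘ₗ alp S a) S.hE := by
  rw [← hE_aE, cm, cvp_un_right]; rfl

lemma comp_cm {C R R' : Type} [AddCommGroup C] [Module k C] [Coalgebra k C] [Ring R] [Algebra k R]
  [Ring R'] [Algebra k R'] (g : R →ₗ[k] R') (hg : ∀ x y, g (x * y) = g x * g y) (F G : C →ₗ[k] R) :
  g ∘ₗ cm F G = cm (g ∘ₗ F) (g ∘ₗ G) := by
  ext c
  obtain ⟨n, u, hu⟩ := exists_rep k c
  simp [cm_rep _ _ hu, hg]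

lemma ga_mu_aux : ∃ χ : H →ₗ[k] A, cm S.hE (mu S finv) = S.aE ∘ₗ χ := by
  let χ2 : H →ₗ[k] H →ₗ[k] A :=
    ((cvpL (LinearMap.mul k A)).flip (gg S) ∘ₗ S.act.flip ∘ₗ rho finv).flip
  refine ⟨sw χ2, ?_⟩
  let T : H →ₗ[k] H →ₗ[k] E := LinearMap.mk₂ k
    (fun y c => S.aE (rho finv c) * S.hE (ant (k := k) y))
    (by intros; simp [mul_add]) (by intros; simp) (by intros; simp [add_mul]) (by intros; simp)
  let T' : H →ₗ[k] H →ₗ[k] H →ₗ[k] E := LinearMap.mk₂ k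
    (fun x y => LinearMap.mul k E (S.hE x) ∘ₗ T y)
    (by intros; ext; simp [add_mul]) (by intros; ext; simp) (by intros; ext; simp [mul_add])
      (by intros; ext; simp)
  rw [mu_eq S finv T (fun _ _ => rfl), cm, cvp_sw_right _ _ _ T' (fun _ _ _ => rfl), ← sw_sw, comp_sw]
  congr 1
  ext d c
  have h1 : sw T' d c = cm (cm S.hE (un (S.aE (rho finv c)))) (S.hE ∘ₗ ant) d := by
    obtain ⟨n, u, hu⟩ := exists_rep k d
    have e : cm S.hE (un (S.aE (rho finv c))) = LinearMap.mulRight k (S.aE (rho finv c)) ∘ₗ S.hE := by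
      rw [cm, cvp_un_right]; rfl
    rw [e, cm_rep _ _ hu, sw_rep _ hu]
    simp [T', T, mul_assoc]
  rw [h1, hE_aE', cm_assoc, ga_gaS, ← comp_cm _ (aE_mul S)]
  rfl

lemma ga_mu (hfinv : IsConvInverse S.f finv) : cm S.hE (mu S finv) = un 1 := by
  obtain ⟨χ, hχ⟩ := ga_mu_aux S finv
  have h1 : cm (S.aE ∘ₗ χ) S.hE = S.hE := by
    rw [← hχ, cm_assoc, mu_ga S finv hfinv, cm_un]
  let p : A ⊗[k] H →ₗ[k] A := TensorProduct.lift ((LinearMap.lsmul k A).flip.compl₂ Coalgebra.counit)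
  have h2 : ∀ h, χ h = Coalgebra.counit (R := k) h • 1 := by
    intro h
    have h3 := congrArg (fun e => p (S.ι.symm e)) (LinearMap.congr_fun h1 h)
    obtain ⟨n, u, hu⟩ := exists_rep k h
    have h4 := LinearMap.congr_fun (sw_counit_right (k := k) (C := H)
      (B := (LinearMap.lsmul k A).flip.compl₁₂ χ Coalgebra.counit) χ (by intros; simp)) h
    rw [sw_rep _ hu] at h4
    have e : S.hE h = S.ι (1 ⊗ₜ h) := rfl
    simp only [cm_rep _ _ hu, LinearMap.comp_apply, ← ι_eq, ← map_sum, LinearEquiv.symm_apply_apply, e] at h3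
    simp [p] at h3 h4
    rw [← h3, ← h4]
  rw [hχ]; ext h; simp [h2, un_apply, aE_one]

lemma mu_act (hfinv : IsConvInverse S.f finv) (a : A) :
    cm (mu S finv) (S.aE ∘ₗ alp S a) = cm (un (S.aE a)) (mu S finv) := by
  rw [← cm_un (S.aE ∘ₗ alp S a), ← ga_mu S finv hfinv, ← cm_assoc (S.aE ∘ₗ alp S a), ← hE_aE',
    cm_assoc, ← cm_assoc _ S.hE, mu_ga S finv hfinv, un_cm]

end cp
end HCP

set_option linter.unusedSimpArgs false
set_option linter.unusedSectionVars false
namespace HCP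
open HopfCrossed

section inner
variable {k A H : Type} [CommRing k] [AddCommGroup A] [Module k A] [AddCommGroup H] [Module k H]
  [Coalgebra k H] (act : H →ₗ[k] A →ₗ[k] A)

lemma inner_J (r : ℕ) (a : Fin r → A) :
    ∃ J : Tpow k H (r + 1) →ₗ[k] (Tpow k A r) ⊗[k] H,
      (∀ w : Fin (r + 1) → H, J (tp k w) =
        tp k (fun j => act (w j.castSucc) (a j)) ⊗ₜ[k] w (Fin.last r)) ∧
      (∀ h, J (itComul k r h) = cvp (TensorProduct.mk k (Tpow k A r) H)
        (cv (fun i => act.flip (a i))) LinearMap.id h) := by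
  induction r with
  | zero =>
    refine ⟨tlift (tsc ∘ₗ (TensorProduct.mk k (Tpow k A 0) H (tnil k A))), ?_, ?_⟩
    · intro w
      rw [tp_succ, tp_zero, tlift_tcons, LinearMap.comp_apply, tsc_nil]; rfl
    · intro h
      rw [tlift_itComul0, cv_zero, cvp_counit_left]; rfl
  | succ r ih =>
    obtain ⟨J', h1, h2⟩ := ih (Fin.tail a)
    let B3 : A →ₗ[k] (Tpow k A r ⊗[k] H) →ₗ[k] (Tpow k A (r + 1) ⊗[k] H) :=
      (LinearMap.rTensorHom H) ∘ₗ tcons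
    have hB3 : ∀ a t h, B3 a (t ⊗ₜ h) = (tcons a t) ⊗ₜ h := fun _ _ _ => rfl
    refine ⟨tlift ((B3.compl₂ J') ∘ₗ act.flip (a 0)), ?_, ?_⟩
    · intro w
      rw [tp_succ, tlift_tcons, LinearMap.comp_apply, LinearMap.compl₂_apply, h1, hB3, tp_succ]
      rfl
    · intro h
      rw [tlift_itComul, cv_succ, cvp_assoc _ _ B3 (TensorProduct.mk k (Tpow k A r) H) _ _ _
        (fun _ _ _ => rfl), cvp]
      congr 1; congr 1
      ext x y
      simp only [LinearMap.compl₂_apply, LinearMap.comp_apply, LinearMap.compl₁₂_apply, h2]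
      rfl
end inner

section cp
variable {k A H E M : Type} [CommRing k] [Ring A] [Algebra k A] [Ring H] [HopfAlgebra k H]
  [Ring E] [Algebra k E] [AddCommGroup M] [Module k M]
  (S : CrossedProduct k A H E) (Bi : Bimod k E M) (finv : H →ₗ[k] H →ₗ[k] A)

/-- `∑ μ(c₁) Z(c₂) γ(c₃)` -/
def san {C : Type} [AddCommGroup C] [Module k C] [Coalgebra k C] (μ : C →ₗ[k] E) (Z : C →ₗ[k] M)
    (γ : C →ₗ[k] E) : C →ₗ[k] M := cvp Bi.l μ (cvp Bi.r.flip Z γ)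

theorem theta_formula (θ : H → ∀ r : ℕ, CoHCh k A M r →ₗ[k] CoHCh k A M r)
    (hθ : IsCoTheta S Bi finv θ) (h : H) (r : ℕ) (φ : CoHCh k A M r) (a : Fin r → A) :
    θ h r φ (tp k (fun j => qbar k A (a j))) =
      san Bi (mu S finv) (φ ∘ₗ cv (fun i => qbar k A ∘ₗ alp S (a i))) S.hE h := by
  obtain ⟨N, u, hu⟩ := exists_srep (k := k) (r + 3) h
  rw [hθ h r φ a N u hu]
  obtain ⟨J, h1, h2⟩ := inner_J S.act r a
  let W0 : Tpow k A r ⊗[k] H →ₗ[k] M :=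
    TensorProduct.lift ((Bi.r ∘ₗ S.hE).flip ∘ₗ φ ∘ₗ Tmap (qbar k A) r)
  have hW0 : ∀ t w, W0 (t ⊗ₜ w) = Bi.r (S.hE w) (φ (Tmap (qbar k A) r t)) := fun _ _ => rfl
  let P4 : E →ₗ[k] (Tpow k H (r + 1) →ₗ[k] M) := (LinearMap.lcomp k M (W0 ∘ₗ J)) ∘ₗ Bi.l
  have hP4 : ∀ e t, P4 e t = Bi.l e (W0 (J t)) := fun _ _ => rfl
  let X2 : H →ₗ[k] H →ₗ[k] (Tpow k H (r + 2) →ₗ[k] M) := (T3 S finv).compr₂ (tliftL ∘ₗ post P4)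
  let X1 : H →ₗ[k] (Tpow k H (r + 3) →ₗ[k] M) := tliftL ∘ₗ X2
  let Z : H →ₗ[k] M := cvp Bi.r.flip (φ ∘ₗ cv (fun i => qbar k A ∘ₗ alp S (a i))) S.hE
  have hZ : W0 ∘ₗ J ∘ₗ itComul k r = Z := by
    ext w
    obtain ⟨n, v, hv⟩ := exists_rep k w
    simp only [LinearMap.comp_apply, h2, Z, cvp_rep _ _ _ hv, map_sum, ← Tmap_cv]
    rfl
  have hfull : tlift X1 (itComul k (r + 3) h) = san Bi (mu S finv)
      (φ ∘ₗ cv (fun i => qbar k A ∘ₗ alp S (a i))) S.hE h := by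
    rw [tlift_itComul, san, mu, cvp_sw_left]
    congr 1; congr 1
    ext x y
    rw [LinearMap.compl₂_apply]
    refine (tlift_itComul _ (X2 x) y).trans ?_
    simp only [LinearMap.comp_apply, LinearMap.flip_apply, cvpL_apply]
    rw [cvp_sw_left]
    congr 1; congr 1
    ext y z
    rw [LinearMap.compl₂_apply]
    refine (tlift_itComul _ (P4 ∘ₗ (T3 S finv x y)) z).trans ?_
    simp only [LinearMap.comp_apply, LinearMap.flip_apply, cvpL_apply, cvp]
    congr 1; congr 1
    ext z w
    rw [LinearMap.compl₂_apply, LinearMap.comp_apply, hP4, LinearMap.compl₁₂_apply]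
    have := LinearMap.congr_fun hZ w
    simp only [LinearMap.comp_apply] at this
    rw [this]; rfl
  rw [← hfull, hu, map_sum]
  refine Finset.sum_congr rfl fun i _ => ?_
  have e1 : tlift X1 (tp k (u i)) = P4 (T3 S finv (u i 0) (u i 1) (u i 2))
     (tp k (Fin.tail (Fin.tail (Fin.tail (u i))))) := rfl
  rw [e1, hP4, h1, hW0, T3_apply, Tmap_tp]
  have := LinearMap.congr_fun (Bi.lr_comm (S.ι ((finv (ant (k := k) (u i 1)) (u i 2)) ⊗ₜ[k] ant (k := k) (u i 0)))
    (S.hE (u i (Fin.last (r + 3))))) (φ (tp k (fun j : Fin r => qbar k A (S.act (u i ⟨(j : ℕ) + 3, by omega⟩) (a j)))))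
  exact this.symm

end cp
end HCP

set_option linter.unusedSimpArgs false
set_option linter.unusedSectionVars false
namespace HCP
open HopfCrossed

section bim
variable {k C A H E M : Type} [CommRing k] [Ring A] [Algebra k A] [Ring H] [HopfAlgebra k H]
  [Ring E] [Algebra k E] [AddCommGroup M] [Module k M] [AddCommGroup C] [Module k C] [Coalgebra k C]
  (S : CrossedProduct k A H E) (Bi : Bimod k E M)

lemma l_l (F G : C →ₗ[k] E) (Z : C →ₗ[k] M) :
    cvp Bi.l F (cvp Bi.l G Z) = cvp Bi.l (cm F G) Z :=
  (cvp_assoc _ _ _ _ _ _ _ (fun x y z => by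
    have := LinearMap.congr_fun (Bi.l_mul x y) z; exact this)).symm

lemma r_r (F G : C →ₗ[k] E) (Z : C →ₗ[k] M) :
    cvp Bi.r.flip (cvp Bi.r.flip Z F) G = cvp Bi.r.flip Z (cm F G) :=
  cvp_assoc _ _ _ _ _ _ _ (fun x y z => by
    have := LinearMap.congr_fun (Bi.r_mul y z) x; exact this.symm)

lemma l_r (F G : C →ₗ[k] E) (Z : C →ₗ[k] M) :
    cvp Bi.r.flip (cvp Bi.l F Z) G = cvp Bi.l F (cvp Bi.r.flip Z G) :=
  cvp_assoc _ _ _ _ _ _ _ (fun x y z => by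
    have := LinearMap.congr_fun (Bi.lr_comm x z) y; exact this.symm)

lemma san_l (μ γ F : C →ₗ[k] E) (Z : C →ₗ[k] M) :
    san Bi μ (cvp Bi.l F Z) γ = san Bi (cm μ F) Z γ := by
  rw [san, l_r, l_l, san]

lemma san_r (μ γ F : C →ₗ[k] E) (Z : C →ₗ[k] M) :
    san Bi μ (cvp Bi.r.flip Z F) γ = san Bi μ Z (cm F γ) := by
  rw [san, r_r, san]

lemma san_un_l (μ γ : C →ₗ[k] E) (x : E) (Z : C →ₗ[k] M) :
    san Bi (cm (un x) μ) Z γ = Bi.l x ∘ₗ san Bi μ Z γ := by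
  rw [san, ← l_l, cvp_un_left, san]

lemma san_un_r (μ γ : C →ₗ[k] E) (x : E) (Z : C →ₗ[k] M) :
    san Bi μ Z (cm γ (un x)) = Bi.r x ∘ₗ san Bi μ Z γ := by
  rw [san, ← r_r, ← l_r, cvp_un_right, san]; rfl

/-- `Z ↦ san μ Z γ c` -/
def sanT (μ γ : C →ₗ[k] E) (c : C) : (C →ₗ[k] M) →ₗ[k] M :=
  LinearMap.applyₗ c ∘ₗ cvpL Bi.l μ ∘ₗ (cvpL Bi.r.flip).flip γ

lemma sanT_apply (μ γ : C →ₗ[k] E) (c : C) (Z : C →ₗ[k] M) : sanT Bi μ γ c Z = san Bi μ Z γ c := rfl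

lemma LL_aE (F : C →ₗ[k] A) (Z : C →ₗ[k] M) : LL (Bi.l ∘ₗ S.aE) F Z = cvp Bi.l (S.aE ∘ₗ F) Z := rfl
lemma RR_aE (F : C →ₗ[k] A) (Z : C →ₗ[k] M) :
  RR (Bi.r ∘ₗ S.aE) F Z = cvp Bi.r.flip Z (S.aE ∘ₗ F) := rfl

lemma sanT_LL (μ γ : C →ₗ[k] E) (α : A → (C →ₗ[k] A)) 
    (hα : ∀ a, cm μ (S.aE ∘ₗ α a) = cm (un (S.aE a)) μ) (c : C) (x : A) (Z : C →ₗ[k] M) :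
    sanT Bi μ γ c (LL (Bi.l ∘ₗ S.aE) (α x) Z) = la (Bi.l ∘ₗ S.aE) x (sanT Bi μ γ c Z) := by
  rw [sanT_apply, LL_aE, san_l, hα, san_un_l]; rfl

lemma sanT_RR (μ γ : C →ₗ[k] E) (β : A → (C →ₗ[k] A)) 
    (hβ : ∀ a, cm (S.aE ∘ₗ β a) γ = cm γ (un (S.aE a))) (c : C) (x : A) (Z : C →ₗ[k] M) :
    sanT Bi μ γ c (RR (Bi.r ∘ₗ S.aE) (β x) Z) = la (Bi.r ∘ₗ S.aE) x (sanT Bi μ γ c Z) := by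
  rw [sanT_apply, RR_aE, san_r, hβ, san_un_r]; rfl

lemma q_surj : Function.Surjective (qbar k A) := Submodule.mkQ_surjective _

lemma co_ext {n : ℕ} {φ ψ : CoHCh k A M n}
    (h : ∀ a : Fin n → A, φ (tp k (fun i => qbar k A (a i))) = ψ (tp k (fun i => qbar k A (a i)))) :
    φ = ψ := by
  apply Tmap_surj _ q_surj
  apply tpow_ext_tp
  intro v
  simpa [Tmap_tp] using h v

variable (bd : ∀ n : ℕ, CoHCh k A M n →ₗ[k] CoHCh k A M (n + 1))
    (hbd : IsHochschildCoD k (Bi.l ∘ₗ S.aE) (Bi.r ∘ₗ S.aE) bd)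

lemma bd_bD (hbd : IsHochschildCoD k (Bi.l ∘ₗ S.aE) (Bi.r ∘ₗ S.aE) bd) (n : ℕ) (φ : CoHCh k A M n)
    (a : Fin (n + 1) → A) : bd n φ (tp k (fun i => qbar k A (a i))) =
    bD n (· * ·) (la (Bi.l ∘ₗ S.aE)) (la (Bi.r ∘ₗ S.aE)) (fun x => φ (tp k (fun i => qbar k A (x i)))) a := by
  rw [hbd, bD_formula]; rfl

lemma bd_ext (hbd : IsHochschildCoD k (Bi.l ∘ₗ S.aE) (Bi.r ∘ₗ S.aE) bd) (n : ℕ) (φ : CoHCh k A M n)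
    (F : Fin (n + 1) → (C →ₗ[k] A)) :
    bd n φ ∘ₗ cv (fun i => qbar k A ∘ₗ F i) =
      bD n (cvp (LinearMap.mul k A)) (LL (Bi.l ∘ₗ S.aE)) (RR (Bi.r ∘ₗ S.aE))
        (fun X => φ ∘ₗ cv (fun i => qbar k A ∘ₗ X i)) F := by
  have := ext_b n (Bi.l ∘ₗ S.aE) (Bi.r ∘ₗ S.aE) (φ ∘ₗ Tmap (qbar k A) n)
    (bd n φ ∘ₗ Tmap (qbar k A) (n + 1)) (by
      intro a
      rw [LinearMap.comp_apply, Tmap_tp, bd_bD S Bi bd hbd]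
      simp only [LinearMap.comp_apply, Tmap_tp]) F
  rw [LinearMap.comp_assoc, Tmap_cv] at this
  rw [this]
  simp only [LinearMap.comp_assoc, Tmap_cv]

lemma alp_mul (a b : A) : alp S (a * b) = cvp (LinearMap.mul k A) (alp S a) (alp S b) := by
  ext h
  obtain ⟨N, u, hu⟩ := exists_rep k h
  rw [cvp_rep _ _ _ hu]
  exact S.act_mul h a b N u (srep1 hu)

theorem chain_map (finv : H →ₗ[k] H →ₗ[k] A) (hfinv : IsConvInverse S.f finv)
    (hbd : IsHochschildCoD k (Bi.l ∘ₗ S.aE) (Bi.r ∘ₗ S.aE) bd)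
    (θ : H → ∀ r : ℕ, CoHCh k A M r →ₗ[k] CoHCh k A M r) (hθ : IsCoTheta S Bi finv θ)
    (h : H) (r : ℕ) : bd r ∘ₗ θ h r = θ h (r + 1) ∘ₗ bd r := by
  ext φ : 1
  apply co_ext
  intro a
  rw [LinearMap.comp_apply, LinearMap.comp_apply, bd_bD S Bi bd hbd, theta_formula S Bi finv θ hθ,
    ← sanT_apply, bd_ext S Bi bd hbd r φ]
  have := bD_nat r (cvp (C := H) (LinearMap.mul k A)) (LL (Bi.l ∘ₗ S.aE)) (RR (Bi.r ∘ₗ S.aE))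
    (· * ·) (la (Bi.l ∘ₗ S.aE)) (la (Bi.r ∘ₗ S.aE)) (alp S) (alp_mul S)
    (sanT Bi (mu S finv) S.hE h).toAddMonoidHom
    (fun x v => sanT_LL S Bi _ _ _ (mu_act S finv hfinv) h x v)
    (fun x v => sanT_RR S Bi _ _ _ (fun a => (hE_aE' S a).symm) h x v)
    (fun X => φ ∘ₗ cv (fun i => qbar k A ∘ₗ X i)) a
  refine Eq.trans ?_ this.symm
  congr 1
  funext x
  rw [theta_formula S Bi finv θ hθ]; rfl

end bim
end HCP

set_option linter.unusedSimpArgs false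
set_option linter.unusedSectionVars false
namespace HCP
open HopfCrossed

section mulp
variable {k H X Y Z V M E : Type} [CommRing k] [Ring H] [HopfAlgebra k H] [AddCommGroup X] [Module k X]
  [AddCommGroup Y] [Module k Y] [AddCommGroup Z] [Module k Z] [AddCommGroup V] [Module k V]
  [AddCommGroup M] [Module k M] [Ring E] [Algebra k E] (Bi : Bimod k E M)

lemma tt_ext {F G : H ⊗[k] H →ₗ[k] X} (h : ∀ x y, F (x ⊗ₜ y) = G (x ⊗ₜ y)) : F = G :=
  TensorProduct.ext' h

lemma cvp_mulp (B : X →ₗ[k] Y →ₗ[k] Z) (F : H →ₗ[k] X) (G : H →ₗ[k] Y) :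
    cvp B (F ∘ₗ LinearMap.mul' k H) (G ∘ₗ LinearMap.mul' k H) = cvp B F G ∘ₗ LinearMap.mul' k H := by
  apply tt_ext
  intro h l
  obtain ⟨N, u, hu⟩ := exists_rep k h
  obtain ⟨N', v, hv⟩ := exists_rep k l
  rw [cvp_tt hu hv, LinearMap.comp_apply, LinearMap.mul'_apply, cvp, sw_apply, Bialgebra.comul_mul, hu, hv]
  simp [Finset.sum_mul, Finset.mul_sum]
  rw [Finset.sum_comm]

lemma un_mulp (x : X) : un x ∘ₗ LinearMap.mul' k H = un (k := k) (C := H ⊗[k] H) x := by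
  apply tt_ext
  intro h l
  simp [un_apply, mul_comm]

lemma cv_mulp {n : ℕ} (F : Fin n → (H →ₗ[k] V)) :
    cv (fun i => F i ∘ₗ LinearMap.mul' k H) = cv F ∘ₗ LinearMap.mul' k H := by
  induction n with
  | zero => exact (un_mulp (k := k) (H := H) (tnil k V)).symm
  | succ n ih =>
    rw [cv_succ, cv_succ, ← cvp_mulp, ← ih]; rfl

lemma san_mulp (μ γ : H →ₗ[k] E) (Z : H →ₗ[k] M) :
    san Bi (μ ∘ₗ LinearMap.mul' k H) (Z ∘ₗ LinearMap.mul' k H) (γ ∘ₗ LinearMap.mul' k H) =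
      san Bi μ Z γ ∘ₗ LinearMap.mul' k H := by
  rw [san, cvp_mulp, cvp_mulp, san]

def slice : (H ⊗[k] H →ₗ[k] X) → H →ₗ[k] H →ₗ[k] X := fun Z => (TensorProduct.curry Z).flip

lemma slice_apply (Z : H ⊗[k] H →ₗ[k] X) (y c : H) : slice Z y c = Z (c ⊗ₜ y) := rfl

/-- `h⊗l ↦ γ h * γ l` -/
def pr2 (γ : H →ₗ[k] E) : H ⊗[k] H →ₗ[k] E := TensorProduct.lift ((LinearMap.mul k E).compl₁₂ γ γ)
def op2 (γ : H →ₗ[k] E) : H ⊗[k] H →ₗ[k] E := TensorProduct.lift ((LinearMap.mul k E).flip.compl₁₂ γ γ)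
lemma pr2_apply (γ : H →ₗ[k] E) (h l : H) : pr2 γ (h ⊗ₜ l) = γ h * γ l := rfl
lemma op2_apply (γ : H →ₗ[k] E) (h l : H) : op2 γ (h ⊗ₜ l) = γ l * γ h := rfl

lemma san_slice (μ γ : H →ₗ[k] E) (Z : H ⊗[k] H →ₗ[k] M) (h l : H) :
    san Bi (op2 μ) Z (pr2 γ) (h ⊗ₜ l) = san Bi μ (sanT Bi μ γ h ∘ₗ slice Z) γ l := by
  have hl : ∀ x y m, Bi.l (x * y) m = Bi.l x (Bi.l y m) := fun x y m =>
    LinearMap.congr_fun (Bi.l_mul x y) m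
  have hr : ∀ x y m, Bi.r (x * y) m = Bi.r y (Bi.r x m) := fun x y m =>
    LinearMap.congr_fun (Bi.r_mul x y) m
  have hlr : ∀ x y m, Bi.l x (Bi.r y m) = Bi.r y (Bi.l x m) := fun x y m =>
    LinearMap.congr_fun (Bi.lr_comm x y) m
  let W := cvp Bi.r.flip Z (pr2 γ)
  have hW : ∀ c y, W (c ⊗ₜ y) = cvp Bi.r.flip (LinearMap.applyₗ c ∘ₗ (cvpL Bi.r.flip).flip γ ∘ₗ slice Z) γ y := by
    intro c y
    obtain ⟨N, u, hu⟩ := exists_rep k c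
    obtain ⟨N', v, hv⟩ := exists_rep k y
    simp only [W]
    rw [cvp_tt hu hv, cvp_rep _ _ _ hv, Finset.sum_comm]
    refine Finset.sum_congr rfl fun j _ => ?_
    simp only [LinearMap.comp_apply, LinearMap.applyₗ_apply_apply, LinearMap.flip_apply, cvpL_apply, cvp_rep _ _ _ hu,
      pr2_apply, hr, map_sum, slice_apply]
    simp only [LinearMap.sum_apply, LinearMap.flip_apply]
  have hV : ∀ h l, cvp Bi.l (op2 μ) W (h ⊗ₜ l) = cvp Bi.l μ (LinearMap.applyₗ h ∘ₗ cvpL Bi.l μ ∘ₗ slice W) l := by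
    intro c y
    obtain ⟨N, u, hu⟩ := exists_rep k c
    obtain ⟨N', v, hv⟩ := exists_rep k y
    rw [cvp_tt hu hv, cvp_rep _ _ _ hv, Finset.sum_comm]
    refine Finset.sum_congr rfl fun j _ => ?_
    simp only [LinearMap.comp_apply, LinearMap.applyₗ_apply_apply, cvpL_apply, cvp_rep _ _ _ hu,
      op2_apply, hl, map_sum, slice_apply]
  rw [san, hV, san]
  congr 2
  ext y
  obtain ⟨N, u, hu⟩ := exists_rep k h
  obtain ⟨N', v, hv⟩ := exists_rep k y
  simp only [LinearMap.comp_apply, LinearMap.applyₗ_apply_apply, cvpL_apply, cvp_rep _ _ _ hu, sanT, LinearMap.flip_apply,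
      cvp_rep _ _ _ hv, slice_apply, hW, map_sum, hlr]
  rw [Finset.sum_comm]
  simp only [LinearMap.sum_apply, LinearMap.flip_apply]

lemma op2_pr2 (μ γ : H →ₗ[k] E) (hμ : cm μ γ = un 1) : cm (op2 μ) (pr2 γ) = un 1 := by
  apply tt_ext
  intro h l
  obtain ⟨N, u, hu⟩ := exists_rep k h
  obtain ⟨N', v, hv⟩ := exists_rep k l
  have h1 := LinearMap.congr_fun hμ h
  have h2 := LinearMap.congr_fun hμ l
  rw [cm_rep _ _ hu, un_apply] at h1
  rw [cm_rep _ _ hv, un_apply] at h2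
  rw [cm, cvp_tt hu hv, Finset.sum_comm]
  have : ∀ j, (∑ i, LinearMap.mul k E (op2 μ (u i 0 ⊗ₜ[k] v j 0)) (pr2 γ (u i 1 ⊗ₜ[k] v j 1))) =
      Coalgebra.counit (R := k) h • (μ (v j 0) * γ (v j 1)) := by
    intro j
    have e : ∀ i, LinearMap.mul k E (op2 μ (u i 0 ⊗ₜ[k] v j 0)) (pr2 γ (u i 1 ⊗ₜ[k] v j 1)) =
      μ (v j 0) * (μ (u i 0) * γ (u i 1)) * γ (v j 1) := by
      intro i; simp [op2_apply, pr2_apply, mul_assoc]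
    simp only [e, ← Finset.sum_mul, ← Finset.mul_sum, h1]
    simp
  simp only [this, ← Finset.smul_sum, h2]
  simp [un_apply, smul_smul, mul_comm]

end mulp

section cp
variable {k A H E M : Type} [CommRing k] [Ring A] [Algebra k A] [Ring H] [HopfAlgebra k H]
  [Ring E] [Algebra k E] [AddCommGroup M] [Module k M] 
  (S : CrossedProduct k A H E) (Bi : Bimod k E M) (finv : H →ₗ[k] H →ₗ[k] A)

def al2 (a : A) : H ⊗[k] H →ₗ[k] A := TensorProduct.lift (S.act.compl₂ (alp S a))
def be2 (a : A) : H ⊗[k] H →ₗ[k] A := alp S a ∘ₗ LinearMap.mul' k H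

lemma al2_apply (a : A) (h l : H) : al2 S a (h ⊗ₜ l) = S.act h (S.act l a) := rfl
lemma be2_apply (a : A) (h l : H) : be2 S a (h ⊗ₜ l) = S.act (h * l) a := rfl

def ff : H ⊗[k] H →ₗ[k] A := TensorProduct.lift S.f

lemma al2_mul (a b : A) : al2 S (a * b) = cvp (LinearMap.mul k A) (al2 S a) (al2 S b) := by
  apply tt_ext
  intro h l
  obtain ⟨N, u, hu⟩ := exists_rep k h
  obtain ⟨N', v, hv⟩ := exists_rep k l
  rw [cvp_tt hu hv, al2_apply, S.act_mul l a b _ v (srep1 hv), map_sum, Finset.sum_comm]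
  refine Finset.sum_congr rfl fun j _ => ?_
  rw [S.act_mul h _ _ _ u (srep1 hu)]
  rfl

lemma be2_mul (a b : A) : be2 S (a * b) = cvp (LinearMap.mul k A) (be2 S a) (be2 S b) := by
  rw [be2, be2, be2, alp_mul, cvp_mulp]

lemma twisted (a : A) : cvp (LinearMap.mul k A) (al2 S a) (ff S) = cvp (LinearMap.mul k A) (ff S) (be2 S a) := by
  apply tt_ext
  intro h l
  obtain ⟨N, u, hu⟩ := exists_rep k h
  obtain ⟨N', v, hv⟩ := exists_rep k l
  rw [cvp_tt hu hv, cvp_tt hu hv]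
  exact S.f_twisted h l a _ _ u v (srep1 hu) (srep1 hv)

lemma mu2_al2 (hfinv : IsConvInverse S.f finv) (a : A) :
    cm (op2 (mu S finv)) (S.aE ∘ₗ al2 S a) = cm (un (S.aE a)) (op2 (mu S finv)) := by
  apply tt_ext
  intro h l
  obtain ⟨N, u, hu⟩ := exists_rep k h
  obtain ⟨N', v, hv⟩ := exists_rep k l
  have h1 : ∀ b, _ := fun b => LinearMap.congr_fun (mu_act S finv hfinv b) h
  have h2 := LinearMap.congr_fun (mu_act S finv hfinv a) l
  simp only [cm_rep _ _ hu] at h1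
  rw [cm_rep _ _ hv] at h2
  have e : ∀ b, ∑ i, (mu S finv) (u i 0) * S.aE (S.act (u i 1) b) = S.aE b * mu S finv h := by
    intro b; refine (h1 b).trans ?_
    rw [← cm_rep _ _ hu, cm, cvp_un_left]; rfl
  have e2 : ∑ i, (mu S finv) (v i 0) * S.aE (S.act (v i 1) a) = S.aE a * mu S finv l := by
    refine h2.trans ?_
    rw [cm, cvp_un_left]; rfl
  rw [cm, cvp_tt hu hv, Finset.sum_comm, cm, cvp_un_left]
  simp only [LinearMap.mul_apply', LinearMap.comp_apply, al2_apply, op2_apply, mul_assoc, ← Finset.mul_sum, e]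
  simp only [← mul_assoc, ← Finset.sum_mul, e2]

lemma be2_γm (a : A) : cm (S.aE ∘ₗ be2 S a) (γm S) = cm (γm S) (un (S.aE a)) := by
  rw [be2, γm, ← LinearMap.comp_assoc, cm, cvp_mulp, ← un_mulp, cm, cvp_mulp]
  exact congrArg (fun L => L ∘ₗ LinearMap.mul' k H) (hE_aE' S a).symm

lemma mu2_fE (hfinv : IsConvInverse S.f finv) :
    cm (op2 (mu S finv)) (fE S) = mu S finv ∘ₗ LinearMap.mul' k H := by
  have h1 : cm (γm S) (mu S finv ∘ₗ LinearMap.mul' k H) = un 1 := by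
    rw [γm, cm, cvp_mulp]
    exact (congrArg (fun L => L ∘ₗ LinearMap.mul' k H) (ga_mu S finv hfinv)).trans (un_mulp _)
  have h2 : γ2 S = pr2 S.hE := rfl
  rw [← cm_un (fE S), ← h1, ← cm_assoc (fE S), ← γ2_eq, ← cm_assoc, h2,
    op2_pr2 _ _ (mu_ga S finv hfinv), un_cm]

lemma actT_cv (n : ℕ) (a : Fin n → A) (c y : H) :
    actT S.act n c (cv (fun i => alp S (a i)) y) = cv (fun i => al2 S (a i)) (c ⊗ₜ[k] y) := by
  induction n generalizing c y with
  | zero => simp [cv_zero, actT, smul_smul, mul_comm]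
  | succ n ih =>
    obtain ⟨N, u, hu⟩ := exists_rep k c
    obtain ⟨N', v, hv⟩ := exists_rep k y
    rw [cv_succ, cv_succ, cvp_tt hu hv, cvp_rep _ _ _ hv, actT, cvp_rep _ _ _ hu, Finset.sum_comm]
    simp only [LinearMap.sum_apply, map_sum]
    rw [Finset.sum_comm]
    rw [Finset.sum_comm]
    refine Finset.sum_congr rfl fun i _ => ?_
    refine Finset.sum_congr rfl fun j _ => ?_
    rw [tmapB_tcons]
    exact congrArg _ (ih (Fin.tail a) (u _ 1) (v _ 1))

variable (θ : H → ∀ r : ℕ, CoHCh k A M r →ₗ[k] CoHCh k A M r)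

lemma theta_comp (hθ : IsCoTheta S Bi finv θ) (h l : H) (r : ℕ) (φ : CoHCh k A M r) (a : Fin r → A) :
    θ l r (θ h r φ) (tp k (fun j => qbar k A (a j))) =
      san Bi (op2 (mu S finv)) (φ ∘ₗ cv (fun i => qbar k A ∘ₗ al2 S (a i))) (γ2 S) (h ⊗ₜ l) := by
  have h2 : γ2 S = pr2 S.hE := rfl
  rw [h2, san_slice, theta_formula S Bi finv θ hθ]
  congr 2
  let K : Tpow k A r →ₗ[k] M := sanT Bi (mu S finv) S.hE h ∘ₗ
    (LinearMap.llcomp k H (Tpow k A r) M (φ ∘ₗ Tmap (qbar k A) r)) ∘ₗ (actT S.act r).flip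
  have hK : θ h r φ ∘ₗ Tmap (qbar k A) r = K := by
    apply tpow_ext_tp
    intro v
    rw [LinearMap.comp_apply, Tmap_tp, theta_formula S Bi finv θ hθ, ← sanT_apply]
    simp only [K, LinearMap.comp_apply]
    congr 1
    ext c
    rw [← Tmap_cv]
    simp only [LinearMap.comp_apply, LinearMap.llcomp_apply, LinearMap.flip_apply, actT_tp]
    rfl
  rw [← Tmap_cv, ← LinearMap.comp_assoc, hK]
  ext y
  simp only [K, LinearMap.comp_apply]
  congr 1
  ext c
  rw [← Tmap_cv]
  simp only [LinearMap.comp_apply, LinearMap.llcomp_apply, LinearMap.flip_apply, actT_cv, slice_apply]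

lemma theta_mul (hθ : IsCoTheta S Bi finv θ) (h l : H) (r : ℕ) (φ : CoHCh k A M r) (a : Fin r → A) :
    θ (h * l) r φ (tp k (fun j => qbar k A (a j))) =
      san Bi (mu S finv ∘ₗ LinearMap.mul' k H) (φ ∘ₗ cv (fun i => qbar k A ∘ₗ be2 S (a i))) (γm S) (h ⊗ₜ l) := by
  have : (fun i => qbar k A ∘ₗ be2 S (a i)) = fun i => (qbar k A ∘ₗ alp S (a i)) ∘ₗ LinearMap.mul' k H := rfl
  rw [theta_formula S Bi finv θ hθ, this, cv_mulp, ← LinearMap.comp_assoc, γm, san_mulp]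
  rfl

/-- descended action -/
def bact : H →ₗ[k] Qbar k A →ₗ[k] Qbar k A :=
  ((unitSub k A).liftQ (S.act.flip.compr₂ (qbar k A)) (by
    rintro _ ⟨x, rfl⟩
    rw [LinearMap.mem_ker]
    ext h
    simp [Algebra.algebraMap_eq_smul_one, S.act_one]
    refine (Submodule.Quotient.mk_eq_zero _).2 ?_
    refine Submodule.smul_mem _ _ (Submodule.smul_mem _ _ ⟨1, by simp⟩))).flip

lemma bact_q (h : H) (a : A) : bact S h (qbar k A a) = qbar k A (S.act h a) := rfl

def bal2 : H ⊗[k] H →ₗ[k] Qbar k A →ₗ[k] Qbar k A :=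
  TensorProduct.lift ((LinearMap.mul k (Module.End k (Qbar k A))).compl₁₂ (bact S) (bact S))

def bbe2 : H ⊗[k] H →ₗ[k] Qbar k A →ₗ[k] Qbar k A := bact S ∘ₗ LinearMap.mul' k H

lemma q_al2 (a : A) : qbar k A ∘ₗ al2 S a = (bal2 S).flip (qbar k A a) := by
  apply tt_ext; intro x y; rfl
lemma q_be2 (a : A) : qbar k A ∘ₗ be2 S a = (bbe2 S).flip (qbar k A a) := by
  apply tt_ext; intro x y; rfl

variable (bd : ∀ n : ℕ, CoHCh k A M n →ₗ[k] CoHCh k A M (n + 1))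

lemma san_main1 (hfinv : IsConvInverse S.f finv) (c : H ⊗[k] H) (Z : H ⊗[k] H →ₗ[k] M) :
    sanT Bi (op2 (mu S finv)) (γm S) c (LL (Bi.l ∘ₗ S.aE) (ff S) Z) =
      san Bi (mu S finv ∘ₗ LinearMap.mul' k H) Z (γm S) c := by
  rw [sanT_apply, LL_aE, san_l, ← mu2_fE S finv hfinv]; rfl

lemma san_main2 (c : H ⊗[k] H) (Z : H ⊗[k] H →ₗ[k] M) :
    sanT Bi (op2 (mu S finv)) (γm S) c (RR (Bi.r ∘ₗ S.aE) (ff S) Z) =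
      san Bi (op2 (mu S finv)) Z (γ2 S) c := by
  rw [sanT_apply, RR_aE, san_r, γ2_eq]; rfl

lemma sh_z {R Aa N : Type} [AddCommGroup N] (α β : Aa → R) (f : R) (n : ℕ) (a : Fin n → Aa) :
    sh n α β f (fun _ => (0 : N)) a = 0 :=
  (sh_nat α β f n (0 : N →+ N) (fun _ => (0 : N)) a).symm

theorem comp0 (hfinv : IsConvInverse S.f finv)
    (hbd : IsHochschildCoD k (Bi.l ∘ₗ S.aE) (Bi.r ∘ₗ S.aE) bd) (hθ : IsCoTheta S Bi finv θ)
    (h l : H) (φ : CoHCh k A M 0) (hφ : bd 0 φ = 0) : θ l 0 (θ h 0 φ) = θ (h * l) 0 φ := by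
  apply co_ext
  intro a
  rw [theta_comp S Bi finv θ hθ, theta_mul S Bi finv θ hθ, ← san_main1 S Bi finv hfinv, ← san_main2]
  have := htpy_zero (al2 S) (be2 S) (ff S) (cvp (LinearMap.mul k A)) (LL (Bi.l ∘ₗ S.aE))
    (RR (Bi.r ∘ₗ S.aE)) (fun X => φ ∘ₗ cv (fun i => qbar k A ∘ₗ X i)) a
  have hz : bD 0 (cvp (LinearMap.mul k A)) (LL (C := H ⊗[k] H) (Bi.l ∘ₗ S.aE)) (RR (Bi.r ∘ₗ S.aE))
      (fun X => φ ∘ₗ cv (fun i => qbar k A ∘ₗ X i)) = fun _ => 0 := funext fun F => by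
    rw [← bd_ext S Bi bd hbd 0 φ F, hφ, LinearMap.zero_comp]
  rw [hz, sh_z] at this
  have := congrArg (sanT Bi (op2 (mu S finv)) (γm S) (h ⊗ₜ l)) this
  rw [map_zero, map_sub, eq_comm, sub_eq_zero] at this
  exact this.symm

theorem comp1 (hfinv : IsConvInverse S.f finv)
    (hbd : IsHochschildCoD k (Bi.l ∘ₗ S.aE) (Bi.r ∘ₗ S.aE) bd) (hθ : IsCoTheta S Bi finv θ)
    (h l : H) (n : ℕ) (φ : CoHCh k A M (n + 1)) (hφ : bd (n + 1) φ = 0) :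
    θ l (n + 1) (θ h (n + 1) φ) - θ (h * l) (n + 1) φ ∈ LinearMap.range (bd n) := by
  let T := sanT Bi (op2 (mu S finv)) (γm S) (h ⊗ₜ l)
  let g : CoHCh k A M n := T ∘ₗ (LinearMap.llcomp k (H ⊗[k] H) _ M φ) ∘ₗ
    (Shh (bal2 S) (bbe2 S) (qbar k A ∘ₗ ff S) n).flip
  refine ⟨-g, ?_⟩
  apply co_ext
  intro a
  have key := htpy (al2 S) (be2 S) (ff S) (cvp (LinearMap.mul k A)) (· * ·) (al2_mul S) (be2_mul S)
    (twisted S) n (LL (Bi.l ∘ₗ S.aE))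
    (RR (Bi.r ∘ₗ S.aE)) (fun X => φ ∘ₗ cv (fun i => qbar k A ∘ₗ X i)) a
  have hz : bD (n + 1) (cvp (LinearMap.mul k A)) (LL (C := H ⊗[k] H) (Bi.l ∘ₗ S.aE)) (RR (Bi.r ∘ₗ S.aE))
      (fun X => φ ∘ₗ cv (fun i => qbar k A ∘ₗ X i)) = fun _ => 0 := funext fun F => by
    rw [← bd_ext S Bi bd hbd (n + 1) φ F, hφ, LinearMap.zero_comp]
  rw [hz, sh_z, add_zero] at key
  have key2 := congrArg T key
  rw [map_sub] at key2
  have hg : ∀ b : Fin n → A, g (tp k (fun i => qbar k A (b i))) =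
      T (sh n (al2 S) (be2 S) (ff S) (fun X => φ ∘ₗ cv (fun i => qbar k A ∘ₗ X i)) b) := by
    intro b
    simp only [g, LinearMap.comp_apply]
    congr 1
    refine LinearMap.ext fun c => ?_
    rw [sh_Shh _ (bal2 S) (bbe2 S) _ _ _ (q_al2 S) (q_be2 S)]
    rfl
  have hnat := bD_nat n (· * ·) (fun x => LL (C := H ⊗[k] H) (Bi.l ∘ₗ S.aE) (al2 S x))
    (fun x => RR (C := H ⊗[k] H) (Bi.r ∘ₗ S.aE) (be2 S x))
    (· * ·) (la (Bi.l ∘ₗ S.aE)) (la (Bi.r ∘ₗ S.aE)) id (fun _ _ => rfl)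
    T.toAddMonoidHom
    (fun x v => sanT_LL S Bi _ _ _ (mu2_al2 S finv hfinv) _ x v)
    (fun x v => sanT_RR S Bi _ _ _ (be2_γm S) _ x v)
    (sh n (al2 S) (be2 S) (ff S) (fun X => φ ∘ₗ cv (fun i => qbar k A ∘ₗ X i))) a
  have hb : bd n g (tp k (fun i => qbar k A (a i))) = θ (h * l) (n + 1) φ (tp k (fun i => qbar k A (a i)))
      - θ l (n + 1) (θ h (n + 1) φ) (tp k (fun i => qbar k A (a i))) := by
    rw [theta_comp S Bi finv θ hθ, theta_mul S Bi finv θ hθ, ← san_main1 S Bi finv hfinv, ← san_main2]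
    refine Eq.trans ?_ (hnat.symm.trans key2)
    rw [bd_bD S Bi bd hbd]
    congr 1
    funext x
    rw [hg]; rfl
  rw [map_neg, LinearMap.neg_apply, hb, LinearMap.sub_apply]
  abel

end cp
end HCP

set_option linter.unusedSimpArgs false
set_option linter.unusedSectionVars false
namespace HCP
open HopfCrossed

@[reducible] def mkMod {H Q : Type} [Ring H] [AddCommMonoid Q] (act : H → Q → Q)
    (h0 : ∀ h, act h 0 = 0) (ha : ∀ h x y, act h (x + y) = act h x + act h y)
    (hz : ∀ x, act 0 x = 0) (hp : ∀ h h' x, act (h + h') x = act h x + act h' x)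
    (h1 : ∀ x, act 1 x = x) (hm : ∀ h l x, act l (act h x) = act (h * l) x) :
    Module Hᵐᵒᵖ Q where
  smul h x := act h.unop x
  one_smul x := h1 x
  mul_smul g h x := (hm h.unop g.unop x).symm
  smul_zero h := h0 h.unop
  smul_add h x y := ha h.unop x y
  add_smul g h x := hp g.unop h.unop x
  zero_smul x := hz x

section fin
variable {k A H E M : Type} [CommRing k] [Ring A] [Algebra k A] [Ring H] [HopfAlgebra k H]
  [Ring E] [Algebra k E] [AddCommGroup M] [Module k M] 
  (S : CrossedProduct k A H E) (Bi : Bimod k E M) (finv : H →ₗ[k] H →ₗ[k] A)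
  (θ : H → ∀ r : ℕ, CoHCh k A M r →ₗ[k] CoHCh k A M r)
  (bd : ∀ n : ℕ, CoHCh k A M n →ₗ[k] CoHCh k A M (n + 1))

lemma comul_one_rep : Coalgebra.comul (R := k) (1 : H) =
    ∑ i : Fin 1, (fun _ => ![(1 : H), 1] : Fin 1 → Fin 2 → H) i 0 ⊗ₜ[k]
      (fun _ => ![(1 : H), 1] : Fin 1 → Fin 2 → H) i 1 := by
  simp [Bialgebra.comul_one, Algebra.TensorProduct.one_def]

lemma cvp_one {X Y Z : Type} [AddCommGroup X] [Module k X] [AddCommGroup Y] [Module k Y]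
    [AddCommGroup Z] [Module k Z] (B : X →ₗ[k] Y →ₗ[k] Z) (F : H →ₗ[k] X) (G : H →ₗ[k] Y) :
    cvp B F G 1 = B (F 1) (G 1) := by
  rw [cvp_rep _ _ _ comul_one_rep]; simp

lemma cv_one {V : Type} [AddCommGroup V] [Module k V] {n : ℕ} (F : Fin n → (H →ₗ[k] V)) :
    cv F 1 = tp k (fun i => F i 1) := by
  induction n with
  | zero => simp [cv_zero, tp_zero]
  | succ n ih => rw [cv_succ, cvp_one, ih, tp_succ]; rfl

theorem theta_one (hfinv : IsConvInverse S.f finv) (hθ : IsCoTheta S Bi finv θ) (r : ℕ)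
    (φ : CoHCh k A M r) : θ 1 r φ = φ := by
  apply co_ext
  intro a
  have h1 := LinearMap.congr_fun (mu_ga S finv hfinv) 1
  rw [cm, cvp_one] at h1
  simp only [hE_one, LinearMap.mul_apply', mul_one, un_apply, Bialgebra.counit_one, one_smul] at h1
  rw [theta_formula S Bi finv θ hθ, san, cvp_one, cvp_one, h1, hE_one]
  simp only [LinearMap.flip_apply, Bi.l_one, Bi.r_one, LinearMap.id_apply, LinearMap.comp_apply,
    cv_one, alp_apply, S.one_act]

theorem theta_add (hθ : IsCoTheta S Bi finv θ) (h h' : H) (r : ℕ)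
    (φ : CoHCh k A M r) : θ (h + h') r φ = θ h r φ + θ h' r φ := by
  apply co_ext
  intro a
  simp only [LinearMap.add_apply, theta_formula S Bi finv θ hθ, map_add]

theorem theta_zero (hθ : IsCoTheta S Bi finv θ) (r : ℕ)
    (φ : CoHCh k A M r) : θ 0 r φ = 0 := by
  apply co_ext
  intro a
  simp only [LinearMap.zero_apply, theta_formula S Bi finv θ hθ, map_zero]

theorem final
    (hfinv : IsConvInverse S.f finv)
    (hbd : IsHochschildCoD k (Bi.l ∘ₗ S.aE) (Bi.r ∘ₗ S.aE) bd)
    (hθ : IsCoTheta S Bi finv θ) :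
    (∀ (h : H) (r : ℕ), bd r ∘ₗ θ h r = θ h (r + 1) ∘ₗ bd r) ∧
    (∀ (h l : H) (φ : CoHCh k A M 0), bd 0 φ = 0 →
        θ l 0 (θ h 0 φ) = θ (h * l) 0 φ) ∧
    (∀ (h l : H) (n : ℕ) (φ : CoHCh k A M (n + 1)), bd (n + 1) φ = 0 →
        θ l (n + 1) (θ h (n + 1) φ) - θ (h * l) (n + 1) φ ∈ LinearMap.range (bd n)) ∧
    (∀ φ : CoHCh k A M 0, bd 0 φ = 0 → θ 1 0 φ = φ) ∧
    (∀ (n : ℕ) (φ : CoHCh k A M (n + 1)), bd (n + 1) φ = 0 →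
        θ 1 (n + 1) φ - φ ∈ LinearMap.range (bd n)) ∧
    (∃ inst0 : Module Hᵐᵒᵖ (LinearMap.ker (bd 0)),
      ∀ (h : H) (φ : CoHCh k A M 0) (hφ : φ ∈ LinearMap.ker (bd 0))
        (hθφ : θ h 0 φ ∈ LinearMap.ker (bd 0)),
        (letI := inst0;
          (MulOpposite.op h) • (⟨φ, hφ⟩ : LinearMap.ker (bd 0)) = ⟨θ h 0 φ, hθφ⟩)) ∧
    (∀ n : ℕ, ∃ instn : Module Hᵐᵒᵖ (LinearMap.ker (bd (n + 1)) ⧸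
        (LinearMap.range (bd n)).comap (LinearMap.ker (bd (n + 1))).subtype),
      ∀ (h : H) (φ : CoHCh k A M (n + 1)) (hφ : φ ∈ LinearMap.ker (bd (n + 1)))
        (hθφ : θ h (n + 1) φ ∈ LinearMap.ker (bd (n + 1))),
        (letI := instn;
          (MulOpposite.op h) • (Submodule.Quotient.mk ⟨φ, hφ⟩ :
              LinearMap.ker (bd (n + 1)) ⧸
                (LinearMap.range (bd n)).comap (LinearMap.ker (bd (n + 1))).subtype) =
            Submodule.Quotient.mk ⟨θ h (n + 1) φ, hθφ⟩)) := by
  have hc : ∀ (h : H) (r : ℕ) φ, bd r (θ h r φ) = θ h (r + 1) (bd r φ) := fun h r φ =>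
    LinearMap.congr_fun (chain_map S Bi bd finv hfinv hbd θ hθ h r) φ
  have hk : ∀ (h : H) (r : ℕ), ∀ φ ∈ LinearMap.ker (bd r), θ h r φ ∈ LinearMap.ker (bd r) := by
    intro h r φ hφ
    rw [LinearMap.mem_ker] at *
    rw [hc, hφ, map_zero]
  have hone := theta_one S Bi finv θ hfinv hθ
  have hadd := theta_add S Bi finv θ hθ
  have hzero := theta_zero S Bi finv θ hθ
  have hm0 := comp0 S Bi finv θ bd hfinv hbd hθ
  have hm1 := comp1 S Bi finv θ bd hfinv hbd hθ
  refine ⟨chain_map S Bi bd finv hfinv hbd θ hθ, hm0, hm1, fun φ _ => hone 0 φ, fun n φ _ => ?_, ?_, ?_⟩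
  · rw [hone, sub_self]; exact Submodule.zero_mem _
  · refine ⟨mkMod (fun h x => (θ h 0).restrict (hk h 0) x) (fun h => map_zero _)
      (fun h x y => map_add _ x y) (fun x => Subtype.ext (hzero 0 x.1)) (fun h h' x => Subtype.ext (hadd h h' 0 x.1))
      (fun x => Subtype.ext (hone 0 x.1)) (fun h l x => Subtype.ext (hm0 h l x.1 x.2)), ?_⟩
    intro h φ hφ hθφ
    rfl
  · intro n
    have hp : ∀ h : H, (LinearMap.range (bd n)).comap (LinearMap.ker (bd (n + 1))).subtype ≤
        ((LinearMap.range (bd n)).comap (LinearMap.ker (bd (n + 1))).subtype).comap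
          ((θ h (n + 1)).restrict (hk h (n + 1))) := by
      rintro h x ⟨g, hg⟩
      refine ⟨θ h n g, ?_⟩
      rw [hc, hg]; rfl
    refine ⟨mkMod (fun h x => Submodule.mapQ _ _ ((θ h (n + 1)).restrict (hk h (n + 1))) (hp h) x)
      (fun h => map_zero _) (fun h x y => map_add _ x y) ?_ ?_ ?_ ?_, ?_⟩
    · intro x
      obtain ⟨x, rfl⟩ := Submodule.Quotient.mk_surjective _ x
      refine congrArg Submodule.Quotient.mk (Subtype.ext (hzero _ x.1))
    · intro h h' x
      obtain ⟨x, rfl⟩ := Submodule.Quotient.mk_surjective _ x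
      refine congrArg Submodule.Quotient.mk (Subtype.ext (hadd h h' _ x.1))
    · intro x
      obtain ⟨x, rfl⟩ := Submodule.Quotient.mk_surjective _ x
      refine congrArg Submodule.Quotient.mk (Subtype.ext (hone _ x.1))
    · intro h l x
      obtain ⟨x, rfl⟩ := Submodule.Quotient.mk_surjective _ x
      exact (Submodule.Quotient.eq _).2 (hm1 h l n x.1 x.2)
    · intro h φ hφ hθφ
      rfl

end fin
end HCP

namespace HopfCrossed

section Statement14

variable {k A H E M : Type} [CommRing k] [Ring A] [Algebra k A] [Ring H] [HopfAlgebra k H]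
  [Ring E] [Algebra k E] [AddCommGroup M] [Module k M]

/-- **The right `H`-module structure on Hochschild cohomology `H^*(A, M)`.**
Let `E = A #_f H` be a crossed product with convolution invertible cocycle, and let `M` be
an `E`-bimodule, regarded as an `A`-bimodule via `a ↦ a # 1`.  The maps
`θ_h^r(φ)(𝐚) = (1 # h⁽¹⁾)⁻¹ φ(𝐚^{h⁽²⁾}) (1 # h⁽³⁾)` form an endomorphism of the
normalized Hochschild cochain complex `(Hom_k(Ā^*, M), b^*)`.  On Hochschild cohomology,
the endomorphisms induced by `θ_l ∘ θ_h` and by `θ_{hl}` coincide, and `θ_1` induces the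
identity; consequently `H^*(A, M)` carries a right `H`-module structure. -/
theorem hochschild_cohomology_H_module
    (S : CrossedProduct k A H E) (Bi : Bimod k E M)
    (finv : H →ₗ[k] H →ₗ[k] A) (hfinv : IsConvInverse S.f finv)
    (bd : ∀ n : ℕ, CoHCh k A M n →ₗ[k] CoHCh k A M (n + 1))
    (hbd : IsHochschildCoD k (Bi.l ∘ₗ S.aE) (Bi.r ∘ₗ S.aE) bd)
    (θ : H → ∀ r : ℕ, CoHCh k A M r →ₗ[k] CoHCh k A M r) (hθ : IsCoTheta S Bi finv θ) :
    -- `θ_h` is an endomorphism of the normalized Hochschild cochain complex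
    (∀ (h : H) (r : ℕ), bd r ∘ₗ θ h r = θ h (r + 1) ∘ₗ bd r) ∧
    -- `θ_l ∘ θ_h` and `θ_{hl}` induce the same endomorphism of cohomology
    (∀ (h l : H) (φ : CoHCh k A M 0), bd 0 φ = 0 →
        θ l 0 (θ h 0 φ) = θ (h * l) 0 φ) ∧
    (∀ (h l : H) (n : ℕ) (φ : CoHCh k A M (n + 1)), bd (n + 1) φ = 0 →
        θ l (n + 1) (θ h (n + 1) φ) - θ (h * l) (n + 1) φ ∈ LinearMap.range (bd n)) ∧
    -- `θ_1` induces the identity on cohomology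
    (∀ φ : CoHCh k A M 0, bd 0 φ = 0 → θ 1 0 φ = φ) ∧
    (∀ (n : ℕ) (φ : CoHCh k A M (n + 1)), bd (n + 1) φ = 0 →
        θ 1 (n + 1) φ - φ ∈ LinearMap.range (bd n)) ∧
    -- consequently, `H^*(A, M)` is a right `H`-module via `[φ] • h = [θ_h φ]`
    (∃ inst0 : Module Hᵐᵒᵖ (LinearMap.ker (bd 0)),
      ∀ (h : H) (φ : CoHCh k A M 0) (hφ : φ ∈ LinearMap.ker (bd 0))
        (hθφ : θ h 0 φ ∈ LinearMap.ker (bd 0)),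
        (letI := inst0;
          (MulOpposite.op h) • (⟨φ, hφ⟩ : LinearMap.ker (bd 0)) = ⟨θ h 0 φ, hθφ⟩)) ∧
    (∀ n : ℕ, ∃ instn : Module Hᵐᵒᵖ (LinearMap.ker (bd (n + 1)) ⧸
        (LinearMap.range (bd n)).comap (LinearMap.ker (bd (n + 1))).subtype),
      ∀ (h : H) (φ : CoHCh k A M (n + 1)) (hφ : φ ∈ LinearMap.ker (bd (n + 1)))
        (hθφ : θ h (n + 1) φ ∈ LinearMap.ker (bd (n + 1))),
        (letI := instn;
          (MulOpposite.op h) • (Submodule.Quotient.mk ⟨φ, hφ⟩ :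
              LinearMap.ker (bd (n + 1)) ⧸
                (LinearMap.range (bd n)).comap (LinearMap.ker (bd (n + 1))).subtype) =
            Submodule.Quotient.mk ⟨θ h (n + 1) φ, hθφ⟩)) := by
  exact HCP.final S Bi finv θ bd hfinv hbd hθ

end Statement14

end HopfCrossed
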